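/- Let Λ be a nonempty finite set, n ≥ 1, and let M be a symmetric positive definite real Λ×Λ matrix whose largest eigenvalue ‖M‖ satisfies ‖M‖ < n. Let μ be the uniform probability measure on the unit sphere S^{n-1} ⊂ ℝ^n, and for h ∈ ℝ^n let μ^h be the probability measure with density proportional to e^{h·σ} with respect to μ. Assume there is γ > 0 such that for every h ∈ ℝ^n and every smooth f : ℝ^n → ℝ one has Ent_{μ^h}(f²) ≤ (2/γ) ∫ ‖∇^T f(σ)‖² dμ^h(σ), where ∇^T f(σ) = ∇f(σ) − (σ·∇f(σ))σ is the tangential (spherical) gradient. Let ν be the probability measure on (ℝ^n)^Λ with density proportional to exp(−(1/2) Σ_{x,y∈Λ} M_{xy} σ_x·σ_y) with respect to the product measure ⊗_{x∈Λ} μ. Then for every smooth F : (ℝ^n)^Λ → ℝ, Ent_ν(F²) ≤ (2/γ)(1 + 2n‖M‖/(n − ‖M‖)) Σ_{x∈Λ} ∫ ‖∇^T_{σ_x} F(σ)‖² dν(σ), where ∇^T_{σ_x} F(σ) = ∇_{σ_x}F(σ) − (σ_x·∇_{σ_x}F(σ))σ_x. -/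

import Mathlib

/-!
Convexification of the Gibbs measure by a Gaussian auxiliary field.

Write `r - M = Qᵀ Q`. On unit spins `∑ ‖σ x‖²` is constant, so up to a constant the Gibbs weight
is `exp (½ ∑ ‖(Qσ) y‖²)`, a Gaussian integral over an auxiliary field `η` of `exp ⟪Qᵀη, σ⟫`. Hence
`ν` is a mixture, over a renormalised measure `m` on fields `η`, of the product measures
`⊗ₓ μ^{(Qᵀη) x}` (`integral_gibbs_eq`).

The potential of `m` is `½ ‖η‖² - ∑ₓ log ∫ exp ⟪(Qᵀη) x, σ⟫ dμ + const`. On the sphere the function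
`h ↦ log ∫ exp ⟪h, σ⟫ dμ - ‖h‖² / (2n)` is concave (`IsUniformSphere.logLaplace_semiconcave`), and
`‖Qᵀ‖² ≤ r`, so this potential is `(1 - r/n)`-strongly convex (`renPot_convex`). Consequently `m`
satisfies a logarithmic Sobolev inequality (`entropy_exp_le_of_strongly_convex`), which is
derived from the Prékopa–Leindler inequality.

By the chain rule, `Ent_ν(f)` is the `m`-average of the entropies of `f` under the product measures
plus the entropy under `m` of the averages `G(η)`. The former are at most the sums of the
single-site entropies (`ent_pi_le`), to which the single-spin inequality applies. For the latter,
`∇G` is `Q` applied to the covariances of `f` with the spins, and each covariance is bounded by the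
corresponding single-site entropy (`norm_cov_sq_le`, from entropy duality and Hoeffding's lemma).
Together these give the constant `1 + nr/(n - r)` (`ent_gibbs_le`), which is better than required.
This is applied to `f = F² + ε`, after which `ε → 0`.
-/

open MeasureTheory Matrix Real
open scoped RealInnerProductSpace

/-- Entropy of a nonnegative function `f` with respect to a measure `m`:
`Ent_m(f) = ∫ f log f dm - (∫ f dm) log (∫ f dm)`. -/
noncomputable def ent {X : Type*} [MeasurableSpace X]
    (m : MeasureTheory.Measure X) (f : X → ℝ) : ℝ :=
  (∫ x, f x * Real.log (f x) ∂m) - (∫ x, f x ∂m) * Real.log (∫ x, f x ∂m)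

set_option linter.unusedSectionVars false

/-! ### The Prékopa–Leindler inequality -/

open scoped ENNReal in
/-- One-dimensional Brunn–Minkowski inequality; translates of (compact approximations of) `A` and
`B` that meet in a single point fit side by side into `A + B`. -/
lemma volume_add_le_of_add_mem {A B C : Set ℝ} (hA : MeasurableSet A) (hB : MeasurableSet B)
    (hAn : A.Nonempty) (hBn : B.Nonempty) (hC : ∀ a ∈ A, ∀ b ∈ B, a + b ∈ C) :
    volume A + volume B ≤ volume C := by
  have key : ∀ K ⊆ A, IsCompact K → K.Nonempty → ∀ L ⊆ B, IsCompact L → L.Nonempty →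
      volume K + volume L ≤ volume C := by
    intro K hKA hK hKn L hLB hL hLn
    have hk := hK.sSup_mem hKn
    have hl := hL.sInf_mem hLn
    set k := sSup K
    set l := sInf L
    have h1 : volume ((fun x => x + l) '' K) = volume K := by
      simp [Set.image_add_right]
    have h2 : volume ((fun x => k + x) '' L) = volume L := by
      simp [Set.image_add_left]
    have hm : MeasurableSet ((fun x => k + x) '' L) :=
      (hL.image (by fun_prop)).isClosed.measurableSet
    rw [← h1, ← h2, ← measure_union₀ hm.nullMeasurableSet]
    · apply measure_mono
      rintro _ (⟨x, hx, rfl⟩ | ⟨x, hx, rfl⟩)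
      · exact hC _ (hKA hx) _ (hLB hl)
      · exact hC _ (hKA hk) _ (hLB hx)
    · refine measure_mono_null (t := {k + l}) ?_ (by simp)
      rintro _ ⟨⟨x, hx, rfl⟩, ⟨y, hy, hxy⟩⟩
      have h3 : x ≤ k := le_csSup hK.bddAbove hx
      have h4 : l ≤ y := csInf_le hL.bddBelow hy
      change k + y = x + l at hxy
      change x + l = k + l
      linarith
  obtain ⟨a, ha⟩ := hAn
  obtain ⟨b, hb⟩ := hBn
  rw [hA.measure_eq_iSup_isCompact, hB.measure_eq_iSup_isCompact]
  simp only [iSup_and']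
  refine ENNReal.biSup_add_biSup_le' ⟨∅, by simp⟩ ⟨∅, by simp⟩ ?_
  rintro K ⟨hKA, hK⟩ L ⟨hLB, hL⟩
  refine le_trans (add_le_add (measure_mono (Set.subset_insert a K))
    (measure_mono (Set.subset_insert b L))) ?_
  exact key _ (Set.insert_subset ha hKA) (hK.insert a) ⟨a, by simp⟩ _
    (Set.insert_subset hb hLB) (hL.insert b) ⟨b, by simp⟩

/-- One-dimensional Prékopa–Leindler inequality for functions with supremum `1`, in its stronger
additive form; it is Brunn–Minkowski applied to superlevel sets. -/
lemma prekopaLeindler_real_normalized {t s : ℝ} (ht : 0 < t) (hs : 0 < s) (hts : t + s = 1)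
    {u v w : ℝ → ℝ} (hu : Measurable u) (hv : Measurable v) (hw : Measurable w)
    (hu0 : ∀ x, 0 ≤ u x) (hv0 : ∀ x, 0 ≤ v x) (hw0 : ∀ x, 0 ≤ w x)
    (hv1 : ∀ x, v x ≤ 1) (hw1 : ∀ x, w x ≤ 1)
    (hvs : ∀ c < 1, ∃ x, c < v x) (hws : ∀ c < 1, ∃ x, c < w x)
    (h : ∀ x y, v x ^ t * w y ^ s ≤ u (t * x + s * y)) :
    ENNReal.ofReal t * (∫⁻ x, ENNReal.ofReal (v x)) + ENNReal.ofReal s * (∫⁻ x, ENNReal.ofReal (w x))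
      ≤ ∫⁻ x, ENNReal.ofReal (u x) := by
  rw [lintegral_eq_lintegral_meas_lt _ (Filter.Eventually.of_forall hu0) hu.aemeasurable,
    lintegral_eq_lintegral_meas_lt _ (Filter.Eventually.of_forall hv0) hv.aemeasurable,
    lintegral_eq_lintegral_meas_lt _ (Filter.Eventually.of_forall hw0) hw.aemeasurable,
    ← lintegral_const_mul' _ _ ENNReal.ofReal_ne_top,
    ← lintegral_const_mul' _ _ ENNReal.ofReal_ne_top, ← lintegral_add_left']
  swap
  · refine AEMeasurable.const_mul ?_ _
    have hanti : Antitone fun c : ℝ => volume {x | c < v x} := fun a b hab =>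
      measure_mono (fun x (hx : b < v x) => lt_of_le_of_lt hab hx)
    exact hanti.measurable.aemeasurable
  refine setLIntegral_mono' measurableSet_Ioi ?_
  intro c hc
  rcases lt_or_ge c 1 with hc1 | hc1
  · have hA : volume ((fun x => t * x) '' {x | c < v x}) =
        ENNReal.ofReal t * volume {x | c < v x} := by
      have := Measure.addHaar_smul (volume : Measure ℝ) t {x | c < v x}
      rw [Module.finrank_self, pow_one, abs_of_pos ht] at this
      exact this
    have hB : volume ((fun x => s * x) '' {x | c < w x}) =
        ENNReal.ofReal s * volume {x | c < w x} := by
      have := Measure.addHaar_smul (volume : Measure ℝ) s {x | c < w x}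
      rw [Module.finrank_self, pow_one, abs_of_pos hs] at this
      exact this
    rw [← hA, ← hB]
    apply volume_add_le_of_add_mem
    · exact ((Homeomorph.mulLeft₀ t ht.ne').measurableEmbedding).measurableSet_image.2
        (measurableSet_lt measurable_const hv)
    · exact ((Homeomorph.mulLeft₀ s hs.ne').measurableEmbedding).measurableSet_image.2
        (measurableSet_lt measurable_const hw)
    · exact (hvs c hc1).elim fun x hx => ⟨_, x, hx, rfl⟩
    · exact (hws c hc1).elim fun x hx => ⟨_, x, hx, rfl⟩
    · rintro _ ⟨x, hx, rfl⟩ _ ⟨y, hy, rfl⟩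
      refine lt_of_lt_of_le ?_ (h x y)
      have hc0 : 0 < c := hc
      have e : c = c ^ t * c ^ s := by rw [← Real.rpow_add hc0, hts, Real.rpow_one]
      rw [e]
      exact mul_lt_mul'' (Real.rpow_lt_rpow hc0.le hx ht) (Real.rpow_lt_rpow hc0.le hy hs)
        (by positivity) (by positivity)
  · have hA : {x | c < v x} = ∅ := by
      ext x; simpa using (hv1 x).trans hc1
    have hB : {x | c < w x} = ∅ := by
      ext x; simpa using (hw1 x).trans hc1
    simp [hA, hB]

open scoped ENNReal in
/-- The Prékopa–Leindler property of a measure `m` on a real vector space. -/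
def PrekopaLeindler {X : Type*} [AddCommGroup X] [Module ℝ X] [MeasurableSpace X]
    (m : Measure X) : Prop :=
  ∀ t s : ℝ, 0 < t → 0 < s → t + s = 1 → ∀ u v w : X → ℝ≥0∞,
    Measurable u → Measurable v → Measurable w →
    (∀ x y, v x ^ t * w y ^ s ≤ u (t • x + s • y)) →
    (∫⁻ x, v x ∂m) ^ t * (∫⁻ x, w x ∂m) ^ s ≤ ∫⁻ x, u x ∂m

open scoped ENNReal in
/-- Weighted arithmetic–geometric mean inequality in `ℝ≥0∞`. -/
lemma ennreal_geom_mean_le {t s : ℝ} (ht : 0 < t) (hs : 0 < s) (hts : t + s = 1) (a b : ℝ≥0∞) :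
    a ^ t * b ^ s ≤ ENNReal.ofReal t * a + ENNReal.ofReal s * b := by
  have hp : Real.HolderConjugate t⁻¹ s⁻¹ := by
    refine Real.holderConjugate_iff.2 ⟨?_, ?_⟩
    · rw [one_lt_inv₀ ht]; linarith
    · simpa using hts
  have := ENNReal.young_inequality (a ^ t) (b ^ s) hp
  rw [← ENNReal.rpow_mul, ← ENNReal.rpow_mul, mul_inv_cancel₀ ht.ne', mul_inv_cancel₀ hs.ne',
    ENNReal.rpow_one, ENNReal.rpow_one, ENNReal.ofReal_inv_of_pos ht,
    ENNReal.ofReal_inv_of_pos hs, div_eq_mul_inv, div_eq_mul_inv, inv_inv, inv_inv] at this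
  rwa [mul_comm (ENNReal.ofReal t), mul_comm (ENNReal.ofReal s)]

open scoped ENNReal in
/-- One-dimensional Prékopa–Leindler inequality for bounded functions, by normalising the suprema
to `1`. -/
lemma prekopaLeindler_real_of_bdd {t s : ℝ} (ht : 0 < t) (hs : 0 < s) (hts : t + s = 1)
    {u v w : ℝ → ℝ≥0∞} (hu : Measurable u) (hv : Measurable v) (hw : Measurable w) {N : ℝ≥0∞}
    (hN : N ≠ ∞) (hvN : ∀ x, v x ≤ N) (hwN : ∀ x, w x ≤ N)
    (h : ∀ x y, v x ^ t * w y ^ s ≤ u (t * x + s * y)) :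
    (∫⁻ x, v x) ^ t * (∫⁻ x, w x) ^ s ≤ ∫⁻ x, u x := by
  set a := ⨆ x, v x with ha
  set b := ⨆ x, w x with hb
  have hva : ∀ x, v x ≤ a := le_iSup v
  have hwb : ∀ x, w x ≤ b := le_iSup w
  have haT : a ≠ ∞ := ne_top_of_le_ne_top hN (iSup_le hvN)
  have hbT : b ≠ ∞ := ne_top_of_le_ne_top hN (iSup_le hwN)
  rcases eq_or_ne a 0 with ha0 | ha0
  · have : ∀ x, v x = 0 := fun x => le_antisymm (ha0 ▸ hva x) bot_le
    simp [this, ENNReal.zero_rpow_of_pos ht]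
  rcases eq_or_ne b 0 with hb0 | hb0
  · have : ∀ x, w x = 0 := fun x => le_antisymm (hb0 ▸ hwb x) bot_le
    simp [this, ENNReal.zero_rpow_of_pos hs]
  set q := a ^ t * b ^ s with hq
  have hq0 : q ≠ 0 := by
    simp [hq, ENNReal.rpow_eq_zero_iff, ha0, hb0, haT, hbT]
  have hqT : q ≠ ∞ :=
    ENNReal.mul_ne_top (ENNReal.rpow_ne_top_of_nonneg ht.le haT)
      (ENNReal.rpow_ne_top_of_nonneg hs.le hbT)
  have hv1 : ∀ x, v x / a ≤ 1 := fun x => ENNReal.div_le_of_le_mul (by simpa using hva x)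
  have hw1 : ∀ x, w x / b ≤ 1 := fun x => ENNReal.div_le_of_le_mul (by simpa using hwb x)
  have hvT : ∀ x, v x / a ≠ ∞ := fun x => ne_top_of_le_ne_top ENNReal.one_ne_top (hv1 x)
  have hwT : ∀ x, w x / b ≠ ∞ := fun x => ne_top_of_le_ne_top ENNReal.one_ne_top (hw1 x)
  have huT : ∀ x, min (u x / q) 1 ≠ ∞ := fun x =>
    ne_top_of_le_ne_top ENNReal.one_ne_top (min_le_right _ _)
  have hsup : ∀ (f : ℝ → ℝ≥0∞) (d : ℝ≥0∞), d = ⨆ x, f x → d ≠ 0 → d ≠ ∞ → (∀ x, f x / d ≠ ∞) →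
      ∀ c : ℝ, c < 1 → ∃ x, c < (f x / d).toReal := by
    intro f d hd hd0 hdT hfT c hc
    have h1 : ENNReal.ofReal c * d < d := by
      calc ENNReal.ofReal c * d < 1 * d :=
            ENNReal.mul_lt_mul_left hd0 hdT (by simpa using hc)
        _ = d := one_mul d
    obtain ⟨x, hx⟩ := lt_iSup_iff.1 (h1.trans_eq hd)
    refine ⟨x, ?_⟩
    have h2 : ENNReal.ofReal c < f x / d :=
      (ENNReal.lt_div_iff_mul_lt (Or.inl hd0) (Or.inl hdT)).2 hx
    rcases lt_or_ge c 0 with hc0 | hc0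
    · exact hc0.trans_le ENNReal.toReal_nonneg
    · exact (ENNReal.ofReal_lt_iff_lt_toReal hc0 (hfT x)).1 h2
  have main := prekopaLeindler_real_normalized ht hs hts
    (u := fun x => (min (u x / q) 1).toReal) (v := fun x => (v x / a).toReal)
    (w := fun x => (w x / b).toReal)
    ((hu.div_const q).min measurable_const).ennreal_toReal
    (hv.div_const a).ennreal_toReal (hw.div_const b).ennreal_toReal
    (fun _ => ENNReal.toReal_nonneg) (fun _ => ENNReal.toReal_nonneg)
    (fun _ => ENNReal.toReal_nonneg)
    (fun x => by simpa using ENNReal.toReal_mono ENNReal.one_ne_top (hv1 x))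
    (fun x => by simpa using ENNReal.toReal_mono ENNReal.one_ne_top (hw1 x))
    (hsup v a ha ha0 haT hvT) (hsup w b hb hb0 hbT hwT) (by
      intro x y
      rw [ENNReal.toReal_rpow, ENNReal.toReal_rpow, ← ENNReal.toReal_mul]
      refine ENNReal.toReal_mono (huT _) (le_min ?_ ?_)
      · rw [ENNReal.div_rpow_of_nonneg _ _ ht.le, ENNReal.div_rpow_of_nonneg _ _ hs.le]
        rw [ENNReal.le_div_iff_mul_le (Or.inl hq0) (Or.inl hqT)]
        calc v x ^ t / a ^ t * (w y ^ s / b ^ s) * q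
            = (a ^ t * (v x ^ t / a ^ t)) * (b ^ s * (w y ^ s / b ^ s)) := by rw [hq]; ring
          _ ≤ v x ^ t * w y ^ s := mul_le_mul' ENNReal.mul_div_le ENNReal.mul_div_le
          _ ≤ _ := h x y
      · exact mul_le_one' (ENNReal.rpow_le_one (hv1 x) ht.le) (ENNReal.rpow_le_one (hw1 y) hs.le))
  simp only [ENNReal.ofReal_toReal (hvT _), ENNReal.ofReal_toReal (hwT _),
    ENNReal.ofReal_toReal (huT _)] at main
  have main2 := (ennreal_geom_mean_le ht hs hts _ _).trans (main.trans
    (lintegral_mono (fun x => min_le_left (u x / q) 1)))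
  simp only [div_eq_mul_inv] at main2
  rw [lintegral_mul_const _ hu, lintegral_mul_const _ hv, lintegral_mul_const _ hw,
    ENNReal.mul_rpow_of_nonneg _ _ ht.le, ENNReal.mul_rpow_of_nonneg _ _ hs.le,
    ENNReal.inv_rpow, ENNReal.inv_rpow] at main2
  have hq' : (a ^ t)⁻¹ * (b ^ s)⁻¹ = q⁻¹ := by
    rw [hq, ENNReal.mul_inv (Or.inr (ENNReal.rpow_ne_top_of_nonneg hs.le hbT))
      (Or.inl (ENNReal.rpow_ne_top_of_nonneg ht.le haT))]
  rw [mul_mul_mul_comm, hq'] at main2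
  calc _ = (∫⁻ x, v x) ^ t * (∫⁻ x, w x) ^ s * q⁻¹ * q := by
        rw [mul_assoc, ENNReal.inv_mul_cancel hq0 hqT, mul_one]
    _ ≤ (∫⁻ x, u x) * q⁻¹ * q := by gcongr
    _ = _ := by rw [mul_assoc, ENNReal.inv_mul_cancel hq0 hqT, mul_one]

open scoped ENNReal in
lemma prekopaLeindler_real : PrekopaLeindler (volume : Measure ℝ) := by
  intro t s ht hs hts u v w hu hv hw h
  rcases eq_or_ne (∫⁻ x, v x) 0 with hv0 | hv0
  · simp [hv0, ENNReal.zero_rpow_of_pos ht]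
  rcases eq_or_ne (∫⁻ x, w x) 0 with hw0 | hw0
  · simp [hw0, ENNReal.zero_rpow_of_pos hs]
  have htr : ∀ f : ℝ → ℝ≥0∞, Measurable f →
      Filter.Tendsto (fun N : ℕ => ∫⁻ x, min (f x) N) Filter.atTop (nhds (∫⁻ x, f x)) := by
    intro f hf
    refine lintegral_tendsto_of_tendsto_of_monotone
      (fun N => (hf.min measurable_const).aemeasurable) ?_ ?_
    · refine Filter.Eventually.of_forall fun x N N' hN => ?_
      exact min_le_min le_rfl (by exact_mod_cast hN)
    · refine Filter.Eventually.of_forall fun x => ?_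
      have := (tendsto_const_nhds (x := f x)).min ENNReal.tendsto_nat_nhds_top
      simpa using this
  have hlim : Filter.Tendsto (fun N : ℕ => (∫⁻ x, min (v x) N) ^ t * (∫⁻ x, min (w x) N) ^ s)
      Filter.atTop (nhds ((∫⁻ x, v x) ^ t * (∫⁻ x, w x) ^ s)) := by
    refine ENNReal.Tendsto.mul ((htr v hv).ennrpow_const t) (Or.inl ?_)
      ((htr w hw).ennrpow_const s) (Or.inl ?_)
    · simp [ENNReal.rpow_eq_zero_iff, hv0, ht.not_gt]
    · simp [ENNReal.rpow_eq_zero_iff, hw0, hs.not_gt]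
  refine le_of_tendsto' hlim fun N => ?_
  refine prekopaLeindler_real_of_bdd ht hs hts hu (hv.min measurable_const)
    (hw.min measurable_const) (ENNReal.natCast_ne_top N) (fun x => min_le_right _ _)
    (fun x => min_le_right _ _) fun x y => ?_
  refine le_trans (mul_le_mul' (ENNReal.rpow_le_rpow (min_le_left _ _) ht.le)
    (ENNReal.rpow_le_rpow (min_le_left _ _) hs.le)) (h x y)

/-- The Prékopa–Leindler property passes to products, by applying it in one variable and then in
the other. -/
lemma PrekopaLeindler.prod {X Y : Type*} [AddCommGroup X] [Module ℝ X] [MeasurableSpace X]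
    [AddCommGroup Y] [Module ℝ Y] [MeasurableSpace Y] {m : Measure X} {m' : Measure Y}
    [SFinite m'] (h : PrekopaLeindler m) (h' : PrekopaLeindler m') :
    PrekopaLeindler (m.prod m') := by
  intro t s ht hs hts u v w hu hv hw hle
  rw [lintegral_prod _ hu.aemeasurable, lintegral_prod _ hv.aemeasurable,
    lintegral_prod _ hw.aemeasurable]
  refine h t s ht hs hts _ _ _ hu.lintegral_prod_right' hv.lintegral_prod_right'
    hw.lintegral_prod_right' fun x y => ?_
  exact h' t s ht hs hts _ _ _ (hu.comp measurable_prodMk_left) (hv.comp measurable_prodMk_left)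
    (hw.comp measurable_prodMk_left) fun x' y' => hle (x, x') (y, y')

lemma PrekopaLeindler.of_measurePreserving {X Y : Type*} [AddCommGroup X] [Module ℝ X]
    [MeasurableSpace X] [AddCommGroup Y] [Module ℝ Y] [MeasurableSpace Y] {m : Measure X}
    {m' : Measure Y} (h : PrekopaLeindler m) (e : X → Y) (he : MeasurePreserving e m m')
    (hlin : ∀ (t s : ℝ) (x y : X), e (t • x + s • y) = t • e x + s • e y) :
    PrekopaLeindler m' := by
  intro t s ht hs hts u v w hu hv hw hle
  rw [← he.lintegral_comp hu, ← he.lintegral_comp hv, ← he.lintegral_comp hw]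
  refine h t s ht hs hts _ _ _ (hu.comp he.measurable) (hv.comp he.measurable)
    (hw.comp he.measurable) fun x y => ?_
  rw [hlin]
  exact hle _ _

lemma prekopaLeindler_pi_fin {X : Type*} [AddCommGroup X] [Module ℝ X] [MeasurableSpace X]
    {m : Measure X} [SigmaFinite m] (h : PrekopaLeindler m) (N : ℕ) :
    PrekopaLeindler (Measure.pi fun _ : Fin N => m) := by
  induction N with
  | zero =>
    intro t s ht hs hts u v w hu hv hw hle
    rw [Measure.pi_of_empty (fun _ : Fin 0 => m) 0, lintegral_dirac' _ hu, lintegral_dirac' _ hv,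
      lintegral_dirac' _ hw]
    simpa using hle 0 0
  | succ N ih =>
    refine (h.prod ih).of_measurePreserving _
      (measurePreserving_piFinSuccAbove (fun _ : Fin (N + 1) => m) 0).symm ?_
    intro t s x y
    ext i
    refine Fin.cases ?_ (fun j => ?_) i <;> simp [MeasurableEquiv.piFinSuccAbove]

lemma prekopaLeindler_pi {ι X : Type*} [Fintype ι] [AddCommGroup X] [Module ℝ X]
    [MeasurableSpace X] {m : Measure X} [SigmaFinite m] (h : PrekopaLeindler m) :
    PrekopaLeindler (Measure.pi fun _ : ι => m) := by
  refine (prekopaLeindler_pi_fin h (Fintype.card ι)).of_measurePreserving _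
    (measurePreserving_piCongrLeft (fun _ : ι => m) (Fintype.equivFin ι).symm) ?_
  intro t s x y
  ext i
  obtain ⟨j, rfl⟩ := (Fintype.equivFin ι).symm.surjective i
  simp only [MeasurableEquiv.coe_piCongrLeft, Pi.add_apply, Pi.smul_apply,
    Equiv.piCongrLeft_apply_apply]

lemma prekopaLeindler_pi_euclidean (ι : Type*) [Fintype ι] (n : ℕ) :
    PrekopaLeindler (volume : Measure (ι → EuclideanSpace ℝ (Fin n))) := by
  refine prekopaLeindler_pi ?_
  exact (prekopaLeindler_pi prekopaLeindler_real).of_measurePreserving _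
    (PiLp.volume_preserving_toLp (Fin n)) fun t s x y => rfl

/-! ### Entropy inequality for strongly log-concave measures -/

lemma integrable_of_measurable_bdd {X : Type*} [MeasurableSpace X] {m : Measure X}
    [IsFiniteMeasure m] {f : X → ℝ} (hf : Measurable f) (c : ℝ) (hc : ∀ x, |f x| ≤ c) :
    Integrable f m :=
  Integrable.of_bound hf.aestronglyMeasurable c (Filter.Eventually.of_forall hc)

lemma mul_inner_le_of_quadratic {E : Type*} [NormedAddCommGroup E] [InnerProductSpace ℝ E]
    (a d : E) {s k : ℝ} (hs : 0 < s) (hk : 0 < k) :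
    s * ⟪a, d⟫ - s * k / 2 * ‖d‖ ^ 2 ≤ s * (1 / (2 * k)) * ‖a‖ ^ 2 := by
  have h : 0 ≤ ‖a - k • d‖ ^ 2 := by positivity
  rw [norm_sub_sq_real, inner_smul_right, norm_smul, Real.norm_eq_abs, abs_of_pos hk] at h
  have h2 : 0 ≤ s * (1 / (2 * k)) * (‖a‖ ^ 2 - 2 * (k * ⟪a, d⟫) + (k * ‖d‖) ^ 2) := by positivity
  have h3 : s * (1 / (2 * k)) * (‖a‖ ^ 2 - 2 * (k * ⟪a, d⟫) + (k * ‖d‖) ^ 2)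
    = s * (1 / (2 * k)) * ‖a‖ ^ 2 - (s * ⟪a, d⟫ - s * k / 2 * ‖d‖ ^ 2) := by
    field_simp
    ring
  linarith

/-- The Prékopa–Leindler inequality for the density `e^{-H}`, applied to `e^{g/t}` and `1`. -/
lemma lintegral_exp_rpow_le {ι : Type*} [Fintype ι] {n : ℕ}
    {H : (ι → EuclideanSpace ℝ (Fin n)) → ℝ} (hHm : Measurable H)
    (hprob : IsProbabilityMeasure
      ((volume : Measure (ι → EuclideanSpace ℝ (Fin n))).withDensity
        fun x => ENNReal.ofReal (exp (-H x)))) {l : ℝ}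
    (hconv : ∀ t s : ℝ, 0 < t → 0 < s → t + s = 1 → ∀ x y, H (t • x + s • y) ≤
      t * H x + s * H y - l / 2 * t * s * ∑ i, ‖x i - y i‖ ^ 2)
    {g W : (ι → EuclideanSpace ℝ (Fin n)) → ℝ} (hg : Measurable g) (hW : Measurable W)
    {D : (ι → EuclideanSpace ℝ (Fin n)) → (ι → EuclideanSpace ℝ (Fin n))}
    (hD : ∀ z, ∑ i, ‖D z i‖ ^ 2 ≤ W z) {K : ℝ}
    (hgD : ∀ z x, g x ≤ g z + ∑ i, ⟪D z i, x i - z i⟫ + K / 2 * ∑ i, ‖x i - z i‖ ^ 2)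
    {t s : ℝ} (ht : 0 < t) (hs : 0 < s) (hts : t + s = 1) (hk : 0 < l * t - K * s) :
    (∫⁻ x, ENNReal.ofReal (exp (g x / t)) ∂((volume : Measure
      (ι → EuclideanSpace ℝ (Fin n))).withDensity fun x => ENNReal.ofReal (exp (-H x)))) ^ t ≤
    ∫⁻ x, ENNReal.ofReal (exp (g x + s * (1 / (2 * (l * t - K * s))) * W x)) ∂((volume : Measure
      (ι → EuclideanSpace ℝ (Fin n))).withDensity fun x => ENNReal.ofReal (exp (-H x))) := by
  have hwm : Measurable fun x => ENNReal.ofReal (exp (-H x)) := by fun_prop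
  have hone : ∫⁻ x, ENNReal.ofReal (exp (-H x)) = 1 := by
    have := hprob.measure_univ
    rwa [withDensity_apply _ MeasurableSet.univ, Measure.restrict_univ] at this
  have hpl := prekopaLeindler_pi_euclidean ι n t s ht hs hts
    (fun x => ENNReal.ofReal (exp (-H x)) *
      ENNReal.ofReal (exp (g x + s * (1 / (2 * (l * t - K * s))) * W x)))
    (fun x => ENNReal.ofReal (exp (-H x)) * ENNReal.ofReal (exp (g x / t)))
    (fun x => ENNReal.ofReal (exp (-H x)))
    (by fun_prop) (by fun_prop) hwm ?_
  · rw [hone, ENNReal.one_rpow, mul_one] at hpl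
    rw [lintegral_withDensity_eq_lintegral_mul _ hwm (by fun_prop),
      lintegral_withDensity_eq_lintegral_mul _ hwm (by fun_prop)]
    exact hpl
  · intro x y
    rw [← ENNReal.ofReal_mul (exp_pos _).le, ← ENNReal.ofReal_mul (exp_pos _).le,
      ← Real.exp_add, ← Real.exp_add, ENNReal.ofReal_rpow_of_pos (exp_pos _),
      ENNReal.ofReal_rpow_of_pos (exp_pos _), ← ENNReal.ofReal_mul (by positivity),
      ← Real.exp_mul, ← Real.exp_mul, ← Real.exp_add]
    refine ENNReal.ofReal_le_ofReal (Real.exp_le_exp.2 ?_)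
    set z := t • x + s • y with hz
    have hxz : ∀ i, x i - z i = s • (x i - y i) := by
      intro i
      have : t = 1 - s := by linarith
      simp only [hz, Pi.add_apply, Pi.smul_apply, this]
      module
    have h1 := hconv t s ht hs hts x y
    have h2 := hgD z x
    simp only [hxz, norm_smul, inner_smul_right, Real.norm_eq_abs, abs_of_pos hs, mul_pow,
      ← Finset.mul_sum] at h2
    have h3 : s * ∑ i, ⟪D z i, x i - y i⟫ - s * (l * t - K * s) / 2 * ∑ i, ‖x i - y i‖ ^ 2 ≤
        s * (1 / (2 * (l * t - K * s))) * ∑ i, ‖D z i‖ ^ 2 := by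
      rw [Finset.mul_sum, Finset.mul_sum, Finset.mul_sum, ← Finset.sum_sub_distrib]
      exact Finset.sum_le_sum fun i _ => mul_inner_le_of_quadratic _ _ hs hk
    have h4 : s * (1 / (2 * (l * t - K * s))) * ∑ i, ‖D z i‖ ^ 2 ≤
        s * (1 / (2 * (l * t - K * s))) * W z :=
      mul_le_mul_of_nonneg_left (hD z) (by positivity)
    have e1 : (-H x + g x / t) * t = -(t * H x) + g x := by field_simp
    rw [e1]
    nlinarith

/-- The logarithmic Sobolev inequality for the strongly log-concave density `e^{-H}`, evaluated at
`e^g`. The vector `D z` plays the role of `∇g(z)`: only the second order upper bound `hgD` on `g`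
around `z` is used. -/
lemma entropy_exp_le_of_strongly_convex {ι : Type*} [Fintype ι] {n : ℕ}
    {H : (ι → EuclideanSpace ℝ (Fin n)) → ℝ} (hHm : Measurable H)
    {m : Measure (ι → EuclideanSpace ℝ (Fin n))}
    (hm : m = volume.withDensity fun x => ENNReal.ofReal (exp (-H x)))
    (hprob : IsProbabilityMeasure m) {l : ℝ} (hl : 0 < l)
    (hconv : ∀ t s : ℝ, 0 < t → 0 < s → t + s = 1 → ∀ x y, H (t • x + s • y) ≤
      t * H x + s * H y - l / 2 * t * s * ∑ i, ‖x i - y i‖ ^ 2)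
    {g W : (ι → EuclideanSpace ℝ (Fin n)) → ℝ} (hg : Measurable g) (hW : Measurable W)
    {c C : ℝ} (hgc : ∀ x, |g x| ≤ c) (hWC : ∀ x, W x ≤ C)
    {D : (ι → EuclideanSpace ℝ (Fin n)) → (ι → EuclideanSpace ℝ (Fin n))}
    (hD : ∀ z, ∑ i, ‖D z i‖ ^ 2 ≤ W z) {K : ℝ}
    (hgD : ∀ z x, g x ≤ g z + ∑ i, ⟪D z i, x i - z i⟫ + K / 2 * ∑ i, ‖x i - z i‖ ^ 2) :
    (∫ x, exp (g x) * g x ∂m) - (∫ x, exp (g x) ∂m) * log (∫ x, exp (g x) ∂m) ≤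
      1 / (2 * l) * ∫ x, W x * exp (g x) ∂m := by
  have hW0 : ∀ x, 0 ≤ W x := fun x => le_trans (Finset.sum_nonneg fun i _ => by positivity) (hD x)
  have hC0 : 0 ≤ C := (hW0 0).trans (hWC 0)
  have iexp : ∀ {f : (ι → EuclideanSpace ℝ (Fin n)) → ℝ}, Measurable f → ∀ b, (∀ x, f x ≤ b) →
      Integrable (fun x => exp (f x)) m := fun {f} hf b hb =>
    integrable_of_measurable_bdd (by fun_prop) (exp b) fun x => by
      rw [abs_of_pos (exp_pos _)]; exact exp_le_exp.2 (hb x)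
  have ig := iexp hg c fun x => (abs_le.1 (hgc x)).2
  have igg : Integrable (fun x => exp (g x) * g x) m :=
    ig.mul_bdd hg.aestronglyMeasurable (Filter.Eventually.of_forall hgc)
  have iW : Integrable (fun x => W x * exp (g x)) m :=
    ig.bdd_mul hW.aestronglyMeasurable (Filter.Eventually.of_forall fun x => by
      rw [Real.norm_eq_abs, abs_of_nonneg (hW0 x)]; exact hWC x)
  set Z := ∫ x, exp (g x) ∂m with hZ
  set A := ∫ x, exp (g x) * g x ∂m with hA
  set I := ∫ x, W x * exp (g x) ∂m with hI
  have hZ0 : 0 < Z := integral_exp_pos ig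
  -- expand both sides of Prékopa–Leindler to first order in the weight `s`; the limit `s → 0` is
  -- taken at the end
  have key : ∀ s : ℝ, 0 < s → s < 1 → 0 < l * (1 - s) - K * s →
      A - Z * log Z ≤ 1 / (2 * (l * (1 - s) - K * s)) *
        exp (s * (1 / (2 * (l * (1 - s) - K * s))) * C) * I := by
    intro s hs hs1 hk
    set q := 1 / (2 * (l * (1 - s) - K * s)) with hq
    have hq0 : 0 < q := by positivity
    have ht : 0 < 1 - s := by linarith
    set t := 1 - s with ht'
    have hpl := lintegral_exp_rpow_le hHm (hm ▸ hprob) hconv hg hW hD hgD ht hs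
      (by rw [ht']; ring) hk
    rw [← hm, ← hq] at hpl
    have igt : Integrable (fun x => exp (g x / t)) m :=
      iexp (hg.div_const t) (c / t) fun x => by
        gcongr; exact (abs_le.1 (hgc x)).2
    have igW : Integrable (fun x => exp (g x + s * q * W x)) m :=
      iexp (by fun_prop) (c + s * q * C) fun x => by
        gcongr
        · exact (abs_le.1 (hgc x)).2
        · exact hWC x
    rw [← ofReal_integral_eq_lintegral_ofReal igt
        (Filter.Eventually.of_forall fun x => (exp_pos _).le),
      ← ofReal_integral_eq_lintegral_ofReal igW
        (Filter.Eventually.of_forall fun x => (exp_pos _).le),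
      ENNReal.ofReal_rpow_of_pos (integral_exp_pos igt),
      ENNReal.ofReal_le_ofReal_iff (integral_nonneg fun x => (exp_pos _).le)] at hpl
    have hlog := Real.log_le_log (by have := integral_exp_pos igt; positivity) hpl
    rw [Real.log_rpow (integral_exp_pos igt)] at hlog
    -- Jensen's inequality for the probability measure proportional to `e^g`
    have hlow : s / t * (A / Z) + log Z ≤ log (∫ x, exp (g x / t) ∂m) := by
      set κ := s / t * (A / Z) with hκ
      rw [← Real.log_exp κ, ← Real.log_mul (exp_pos _).ne' hZ0.ne']
      refine Real.log_le_log (by positivity) ?_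
      have e : exp κ * Z = ∫ x, (exp κ * (1 - κ) * exp (g x) +
          exp κ * (s / t) * (exp (g x) * g x)) ∂m := by
        rw [integral_add (ig.const_mul _) (igg.const_mul _), integral_const_mul,
          integral_const_mul, ← hZ, ← hA]
        have : κ * Z = s / t * A := by rw [hκ]; field_simp
        linear_combination (exp κ) * this
      rw [e]
      refine integral_mono ((ig.const_mul _).add (igg.const_mul _)) igt fun x => ?_
      have e2 : exp (g x / t) = exp κ * exp (g x) * exp (s / t * g x - κ) := by
        rw [← Real.exp_add, ← Real.exp_add]
        congr 1
        have hst : s = 1 - t := by rw [ht']; ring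
        rw [hst]
        field_simp
        ring
      simp only
      rw [e2]
      have h5 := Real.add_one_le_exp (s / t * g x - κ)
      have h6 : 0 < exp κ * exp (g x) := by positivity
      nlinarith [mul_le_mul_of_nonneg_left h5 h6.le]
    have hup : log (∫ x, exp (g x + s * q * W x) ∂m) ≤
        log Z + s * (q * exp (s * q * C) * I) / Z := by
      have h7 : ∫ x, exp (g x + s * q * W x) ∂m ≤ Z + s * (q * exp (s * q * C) * I) := by
        have e : Z + s * (q * exp (s * q * C) * I) =
            ∫ x, (exp (g x) + s * (q * exp (s * q * C)) * (W x * exp (g x))) ∂m := by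
          rw [integral_add ig (iW.const_mul _), integral_const_mul]
          ring
        rw [e]
        refine integral_mono igW (ig.add (iW.const_mul _)) fun x => ?_
        simp only
        rw [Real.exp_add]
        have h8 : exp (s * q * W x) ≤ 1 + s * q * W x * exp (s * q * C) := by
          have h9 : exp (s * q * W x) - 1 ≤ s * q * W x * exp (s * q * W x) := by
            have := Real.add_one_le_exp (-(s * q * W x))
            have h10 := mul_le_mul_of_nonneg_left this (exp_pos (s * q * W x)).le
            rw [← Real.exp_add] at h10
            simp only [add_neg_cancel, Real.exp_zero] at h10
            linarith
          have h11 : exp (s * q * W x) ≤ exp (s * q * C) :=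
            Real.exp_le_exp.2 (mul_le_mul_of_nonneg_left (hWC x) (by positivity))
          have h12 := mul_le_mul_of_nonneg_left h11
            (mul_nonneg (mul_nonneg hs.le hq0.le) (hW0 x))
          linarith
        have := mul_le_mul_of_nonneg_left h8 (exp_pos (g x)).le
        linarith
      refine (Real.log_le_log (integral_exp_pos igW) h7).trans ?_
      have e3 : Z + s * (q * exp (s * q * C) * I) =
          Z * (1 + s * (q * exp (s * q * C) * I) / Z) := by field_simp
      have hI0 : 0 ≤ I := integral_nonneg fun x => mul_nonneg (hW0 x) (exp_pos _).le
      have h13 : 0 < 1 + s * (q * exp (s * q * C) * I) / Z := by positivity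
      rw [e3, Real.log_mul hZ0.ne' h13.ne']
      have := Real.log_le_sub_one_of_pos h13
      linarith
    have h14 : t * (s / t * (A / Z) + log Z) = s * (A / Z) + (1 - s) * log Z := by
      rw [mul_add, ← mul_assoc, mul_div_cancel₀ _ ht.ne']
    have h15 := (mul_le_mul_of_nonneg_left hlow ht.le).trans (hlog.trans hup)
    rw [h14] at h15
    have h16 : s * (A / Z - log Z) ≤ s * (q * exp (s * q * C) * I / Z) := by
      have : s * (q * exp (s * q * C) * I) / Z = s * (q * exp (s * q * C) * I / Z) := by ring
      linarith
    have h17 := le_of_mul_le_mul_left h16 hs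
    have h18 := mul_le_mul_of_nonneg_left h17 hZ0.le
    have e4 : Z * (A / Z - log Z) = A - Z * log Z := by field_simp
    have e5 : Z * (q * exp (s * q * C) * I / Z) = q * exp (s * q * C) * I := by field_simp
    linarith
  have hlim : Filter.Tendsto (fun s : ℝ => 1 / (2 * (l * (1 - s) - K * s)) *
        exp (s * (1 / (2 * (l * (1 - s) - K * s))) * C) * I) (nhdsWithin 0 (Set.Ioi 0))
        (nhds (1 / (2 * l) * I)) := by
    have hc : ContinuousAt (fun s : ℝ => 1 / (2 * (l * (1 - s) - K * s)) *
        exp (s * (1 / (2 * (l * (1 - s) - K * s))) * C) * I) 0 := by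
      have : (2 * (l * (1 - (0 : ℝ)) - K * 0)) ≠ 0 := by simp [hl.ne']
      fun_prop (disch := assumption)
    have := hc.tendsto.mono_left (nhdsWithin_le_nhds (s := Set.Ioi 0))
    simpa using this
  refine ge_of_tendsto hlim ?_
  have hev : ∀ᶠ s in nhdsWithin (0 : ℝ) (Set.Ioi 0), 0 < l * (1 - s) - K * s := by
    have hc : ContinuousAt (fun s : ℝ => l * (1 - s) - K * s) 0 := by fun_prop
    have := hc.eventually (lt_mem_nhds (show (0 : ℝ) < l * (1 - 0) - K * 0 by simpa using hl))
    exact this.filter_mono nhdsWithin_le_nhds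
  filter_upwards [hev, Ioo_mem_nhdsGT (show (0 : ℝ) < 1 by norm_num)] with s h1 h2
  exact key s h2.1 h2.2 h1

/-! ### The single-spin log-Laplace transform -/

/-- `μ` is carried by the unit sphere and invariant under linear isometries. -/
structure IsUniformSphere {n : ℕ} (μ : Measure (EuclideanSpace ℝ (Fin n))) : Prop where
  sphere : μ (Metric.sphere (0 : EuclideanSpace ℝ (Fin n)) 1)ᶜ = 0
  map_eq : ∀ L : EuclideanSpace ℝ (Fin n) ≃ₗᵢ[ℝ] EuclideanSpace ℝ (Fin n), μ.map L = μ

namespace IsUniformSphere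

variable {n : ℕ} {μ : Measure (EuclideanSpace ℝ (Fin n))}

lemma ae_norm (h : IsUniformSphere μ) : ∀ᵐ σ ∂μ, ‖σ‖ = 1 := by
  have : (Metric.sphere (0 : EuclideanSpace ℝ (Fin n)) 1) ∈ ae μ := h.sphere
  filter_upwards [this] with σ hσ
  simpa using hσ

lemma integrable [IsProbabilityMeasure μ] (h : IsUniformSphere μ)
    {f : EuclideanSpace ℝ (Fin n) → ℝ} (hf : Continuous f) : Integrable f μ := by
  obtain ⟨C, hC⟩ := (isCompact_sphere (0 : EuclideanSpace ℝ (Fin n)) 1).exists_bound_of_continuousOn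
    hf.continuousOn
  refine Integrable.of_bound hf.aestronglyMeasurable C ?_
  filter_upwards [h.ae_norm] with σ hσ
  exact hC σ (by simpa using hσ)

lemma integral_comp (h : IsUniformSphere μ)
    (L : EuclideanSpace ℝ (Fin n) ≃ₗᵢ[ℝ] EuclideanSpace ℝ (Fin n))
    (f : EuclideanSpace ℝ (Fin n) → ℝ) : ∫ σ, f (L σ) ∂μ = ∫ σ, f σ ∂μ := by
  conv_rhs => rw [← h.map_eq L]
  exact (L.toHomeomorph.measurableEmbedding.integral_map f).symm

lemma integral_inner_congr (h : IsUniformSphere μ) {v w : EuclideanSpace ℝ (Fin n)}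
    (hvw : ‖v‖ = ‖w‖) (f : ℝ → ℝ) : ∫ σ, f ⟪v, σ⟫ ∂μ = ∫ σ, f ⟪w, σ⟫ ∂μ := by
  have h1 := h.integral_comp ((ℝ ∙ (v - w))ᗮ.reflection) (fun σ => f ⟪w, σ⟫)
  rw [← h1]
  congr 1; ext σ
  rw [← LinearIsometryEquiv.inner_map_map ((ℝ ∙ (v - w))ᗮ.reflection) v σ,
    Submodule.reflection_sub hvw]

lemma integral_inner_mul_exp_eq_zero (h : IsUniformSphere μ) {v w : EuclideanSpace ℝ (Fin n)}
    (hvw : ⟪v, w⟫ = 0) : ∫ σ, ⟪v, σ⟫ * exp ⟪w, σ⟫ ∂μ = 0 := by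
  have h1 := h.integral_comp ((ℝ ∙ v)ᗮ.reflection) (fun σ => ⟪v, σ⟫ * exp ⟪w, σ⟫)
  have h2 : ∀ σ, ⟪v, (ℝ ∙ v)ᗮ.reflection σ⟫ * exp ⟪w, (ℝ ∙ v)ᗮ.reflection σ⟫
      = -(⟪v, σ⟫ * exp ⟪w, σ⟫) := by
    intro σ
    have hv : ⟪v, (ℝ ∙ v)ᗮ.reflection σ⟫ = -⟪v, σ⟫ := by
      rw [← LinearIsometryEquiv.inner_map_map ((ℝ ∙ v)ᗮ.reflection), Submodule.reflection_reflection,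
        Submodule.reflection_orthogonalComplement_singleton_eq_neg, inner_neg_left]
    have hw : ⟪w, (ℝ ∙ v)ᗮ.reflection σ⟫ = ⟪w, σ⟫ := by
      rw [← LinearIsometryEquiv.inner_map_map ((ℝ ∙ v)ᗮ.reflection), Submodule.reflection_reflection]
      congr 1
      rw [Submodule.reflection_eq_self_iff, Submodule.mem_orthogonal_singleton_iff_inner_right]
      exact hvw
    rw [hv, hw]; ring
  simp only [h2] at h1
  rw [integral_neg] at h1
  linarith

lemma hasDerivAt_integral_exp [IsProbabilityMeasure μ] (h : IsUniformSphere μ)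
    {p X : EuclideanSpace ℝ (Fin n) → ℝ} (hp : Continuous p) (hX : Continuous X) (k : ℝ) :
    HasDerivAt (fun k => ∫ σ, p σ * exp (k * X σ) ∂μ) (∫ σ, p σ * (X σ * exp (k * X σ)) ∂μ) k := by
  refine (hasDerivAt_integral_of_dominated_loc_of_deriv_le
    (F' := fun k σ => p σ * (X σ * exp (k * X σ)))
    (bound := fun σ => |p σ| * (|X σ| * exp ((|k| + 1) * |X σ|))) (Metric.ball_mem_nhds k one_pos)
    (Filter.Eventually.of_forall fun k => ?_) ?_ ?_ ?_ ?_ ?_).2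
  · exact (by fun_prop : Continuous fun σ => p σ * exp (k * X σ)).aestronglyMeasurable
  · exact h.integrable (by fun_prop)
  · exact (by fun_prop : Continuous fun σ => p σ * (X σ * exp (k * X σ))).aestronglyMeasurable
  · refine Filter.Eventually.of_forall fun σ k' hk' => ?_
    rw [norm_mul, norm_mul, norm_eq_abs, norm_eq_abs, norm_eq_abs, abs_exp]
    have h1 : k' * X σ ≤ (|k| + 1) * |X σ| := by
      refine (le_abs_self _).trans ?_
      rw [abs_mul]
      have : |k'| ≤ |k| + 1 := by
        have h2 : |k' - k| < 1 := by simpa [Real.dist_eq] using hk'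
        have h3 := abs_sub_abs_le_abs_sub k' k
        linarith
      gcongr
    gcongr
  · exact h.integrable (by fun_prop)
  · refine Filter.Eventually.of_forall fun σ k' hk' => ?_
    have h1 : HasDerivAt (fun k' : ℝ => k' * X σ) (X σ) k' := by
      simpa using (hasDerivAt_id k').mul_const (X σ)
    rw [mul_comm (X σ)]
    exact (h1.exp).const_mul (p σ)

/-- Integration by parts on the sphere, obtained by differentiating the rotation identity
`k ∫ ⟪v,σ⟫ e^{⟪ku+εv,σ⟫} = ε ∫ ⟪u,σ⟫ e^{⟪ku+εv,σ⟫}` at `ε = 0`. -/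
lemma integral_sq_mul_exp [IsProbabilityMeasure μ] (h : IsUniformSphere μ)
    {u v : EuclideanSpace ℝ (Fin n)} (hu : ‖u‖ = 1) (hv : ‖v‖ = 1) (huv : ⟪v, u⟫ = 0) (k : ℝ) :
    k * ∫ σ, ⟪v, σ⟫ ^ 2 * exp (k * ⟪u, σ⟫) ∂μ = ∫ σ, ⟪u, σ⟫ * exp (k * ⟪u, σ⟫) ∂μ := by
  have hid : ∀ ε : ℝ, k * ∫ σ, (⟪v, σ⟫ * exp (k * ⟪u, σ⟫)) * exp (ε * ⟪v, σ⟫) ∂μ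
      = ε * ∫ σ, (⟪u, σ⟫ * exp (k * ⟪u, σ⟫)) * exp (ε * ⟪v, σ⟫) ∂μ := by
    intro ε
    have h0 := h.integral_inner_mul_exp_eq_zero (v := k • v - ε • u) (w := k • u + ε • v) (by
      have huv' : ⟪u, v⟫ = 0 := by rw [real_inner_comm]; exact huv
      simp only [inner_sub_left, inner_add_right, inner_smul_left, inner_smul_right, huv, huv',
        real_inner_self_eq_norm_sq, hu, hv]
      simp; ring)
    rw [← integral_const_mul, ← integral_const_mul, ← sub_eq_zero,
      ← integral_sub (h.integrable (by fun_prop)) (h.integrable (by fun_prop)), ← h0]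
    congr 1; ext σ
    simp only [inner_sub_left, inner_add_left, inner_smul_left, exp_add, conj_trivial]
    ring
  have hd1 := (h.hasDerivAt_integral_exp (p := fun σ => ⟪v, σ⟫ * exp (k * ⟪u, σ⟫))
    (X := fun σ => ⟪v, σ⟫) (by fun_prop) (by fun_prop) 0).const_mul k
  have hd2 := (hasDerivAt_id (0 : ℝ)).mul (h.hasDerivAt_integral_exp
    (p := fun σ => ⟪u, σ⟫ * exp (k * ⟪u, σ⟫))
    (X := fun σ => ⟪v, σ⟫) (by fun_prop) (by fun_prop) 0)
  have heq : (fun ε : ℝ => k * ∫ σ, (⟪v, σ⟫ * exp (k * ⟪u, σ⟫)) * exp (ε * ⟪v, σ⟫) ∂μ)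
      = (id * fun ε : ℝ => ∫ σ, (⟪u, σ⟫ * exp (k * ⟪u, σ⟫)) * exp (ε * ⟪v, σ⟫) ∂μ) := by
    ext ε; exact hid ε
  rw [← heq] at hd2
  have := hd1.unique hd2
  simp only [zero_mul, exp_zero, mul_one, one_mul, id, add_zero] at this
  rw [← this]
  congr 2; ext σ; ring

lemma integral_coord_comp (h : IsUniformSphere μ) (i j : Fin n) (f : ℝ → ℝ) :
    ∫ σ, f (σ i) ∂μ = ∫ σ, f (σ j) ∂μ := by
  have := h.integral_inner_congr (v := EuclideanSpace.single i (1 : ℝ))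
    (w := EuclideanSpace.single j (1 : ℝ)) (by simp) f
  simpa [EuclideanSpace.inner_single_left] using this

lemma integral_neg_coord (h : IsUniformSphere μ) (i : Fin n) (f : ℝ → ℝ) :
    ∫ σ, f (-σ i) ∂μ = ∫ σ, f (σ i) ∂μ := by
  have := h.integral_inner_congr (v := -EuclideanSpace.single i (1 : ℝ))
    (w := EuclideanSpace.single i (1 : ℝ)) (by simp) f
  simpa [EuclideanSpace.inner_single_left, inner_neg_left] using this

lemma integral_coord_sq [IsProbabilityMeasure μ] (h : IsUniformSphere μ) (i : Fin n) :
    ∫ σ, (σ i) ^ 2 ∂μ = 1 / n := by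
  have h1 : ∑ j : Fin n, ∫ σ : EuclideanSpace ℝ (Fin n), (σ j) ^ 2 ∂μ = 1 := by
    rw [← integral_finsetSum _ fun j _ => h.integrable (by fun_prop)]
    have : ∀ᵐ σ ∂μ, ∑ j, (σ j) ^ 2 = (1 : ℝ) := by
      filter_upwards [h.ae_norm] with σ hσ
      rw [← EuclideanSpace.real_norm_sq_eq, hσ]; norm_num
    rw [integral_congr_ae this]; simp
  rw [Finset.sum_congr rfl fun j _ => h.integral_coord_comp j i (fun x => x ^ 2)] at h1
  simp at h1
  have hn : (n : ℝ) ≠ 0 := by rintro h0; simp [h0] at h1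
  field_simp; linarith

lemma integral_one_sub_sq_mul_exp [IsProbabilityMeasure μ] (h : IsUniformSphere μ)
    (i : Fin n) (k : ℝ) :
    k * ∫ σ, (1 - (σ i) ^ 2) * exp (k * σ i) ∂μ = (n - 1) * ∫ σ, σ i * exp (k * σ i) ∂μ := by
  have h1 : ∀ j ∈ Finset.univ.erase i, k * ∫ σ, (σ j) ^ 2 * exp (k * σ i) ∂μ
      = ∫ σ, σ i * exp (k * σ i) ∂μ := by
    intro j hj
    have hij : j ≠ i := Finset.ne_of_mem_erase hj
    have := h.integral_sq_mul_exp (u := EuclideanSpace.single i (1 : ℝ))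
      (v := EuclideanSpace.single j (1 : ℝ)) (by simp) (by simp)
      (by simp [EuclideanSpace.inner_single_left, hij]) k
    simpa [EuclideanSpace.inner_single_left] using this
  have h2 := Finset.sum_congr rfl h1
  rw [Finset.sum_const, Finset.card_erase_of_mem (Finset.mem_univ i), Finset.card_univ,
    Fintype.card_fin, nsmul_eq_mul, Nat.cast_sub (by have := i.2; omega)] at h2
  rw [← Finset.mul_sum, ← integral_finsetSum _ fun j _ => h.integrable (by fun_prop)] at h2
  push_cast at h2
  rw [← h2]
  congr 1
  refine integral_congr_ae ?_
  filter_upwards [h.ae_norm] with σ hσ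
  rw [← Finset.sum_mul]
  congr 1
  have h3 : ∑ j, (σ j) ^ 2 = (1 : ℝ) := by
    rw [← EuclideanSpace.real_norm_sq_eq, hσ]; norm_num
  rw [← Finset.add_sum_erase _ _ (Finset.mem_univ i)] at h3
  linarith

lemma cosh_mul_cosh_le {k k' x s : ℝ} (hk : 0 ≤ k) (hkk : k ≤ k') (hs : s ^ 2 ≤ x ^ 2) :
    cosh (k * x) * cosh (k' * s) ≤ cosh (k' * x) * cosh (k * s) := by
  have h0 : 0 ≤ (k' ^ 2 - k ^ 2) * (x ^ 2 - s ^ 2) :=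
    mul_nonneg (by nlinarith) (by linarith)
  have h1 : cosh (k * x + k' * s) ≤ cosh (k' * x + k * s) := by
    rw [cosh_le_cosh, ← sq_le_sq]; nlinarith
  have h2 : cosh (k * x - k' * s) ≤ cosh (k' * x - k * s) := by
    rw [cosh_le_cosh, ← sq_le_sq]; nlinarith
  rw [cosh_add, cosh_add] at h1
  rw [cosh_sub, cosh_sub] at h2
  linarith

lemma integral_even_mul_exp [IsProbabilityMeasure μ] (h : IsUniformSphere μ) (i : Fin n)
    {f : ℝ → ℝ} (hf : Continuous f) (he : ∀ x, f (-x) = f x) (k : ℝ) :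
    ∫ σ, f (σ i) * exp (k * σ i) ∂μ = ∫ σ, f (σ i) * cosh (k * σ i) ∂μ := by
  have h1 := h.integral_neg_coord i (fun x => f x * exp (k * x))
  have h2 : ∫ σ, f (σ i) * cosh (k * σ i) ∂μ
      = (∫ σ, f (σ i) * exp (k * σ i) ∂μ) / 2
        + (∫ σ, f (-σ i) * exp (k * -σ i) ∂μ) / 2 := by
    rw [← integral_div, ← integral_div, ← integral_add (h.integrable (by fun_prop))
      (h.integrable (by fun_prop))]
    congr 1; ext σ
    rw [he, cosh_eq, mul_neg]; ring
  simp only at h1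
  rw [h2, h1]; ring

/-- The second moment of `σᵢ` under the law tilted by `e^{kσᵢ}` is monotone in `k ≥ 0`. -/
lemma chebyshev [IsProbabilityMeasure μ] (h : IsUniformSphere μ) (i : Fin n) {k k' : ℝ}
    (hk : 0 ≤ k) (hkk : k ≤ k') :
    (∫ σ, (σ i) ^ 2 * exp (k * σ i) ∂μ) * ∫ σ, exp (k' * σ i) ∂μ
      ≤ (∫ σ, (σ i) ^ 2 * exp (k' * σ i) ∂μ) * ∫ σ, exp (k * σ i) ∂μ := by
  have e1 := h.integral_even_mul_exp i (f := fun x => x ^ 2) (by fun_prop) (by simp)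
  have e2 : ∀ k : ℝ, ∫ σ, exp (k * σ i) ∂μ = ∫ σ, cosh (k * σ i) ∂μ := by
    intro k
    simpa using h.integral_even_mul_exp i (f := fun _ => 1) (by fun_prop) (by simp) k
  have ep : ∀ k : ℝ, 0 < ∫ σ, exp (k * σ i) ∂μ := fun k =>
    integral_exp_pos (h.integrable (by fun_prop))
  simp only at e1
  rw [e1, e1]
  have hZ := ep k
  rw [e2] at hZ
  rw [e2, e2]
  set A := ∫ σ, (σ i) ^ 2 * cosh (k * σ i) ∂μ with hA
  set B := ∫ σ, cosh (k * σ i) ∂μ with hB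
  have hA0 : 0 ≤ A := integral_nonneg fun σ => mul_nonneg (sq_nonneg _) (cosh_pos _).le
  -- compare with the point `s` at which `x ^ 2` equals its mean under the `k`-tilted law
  set s := √(A / B) with hs
  have hs2 : s ^ 2 = A / B := sq_sqrt (by positivity)
  have hpt : ∀ x : ℝ, 0 ≤ (x ^ 2 - s ^ 2) * (cosh (k' * x) * cosh (k * s)
      - cosh (k * x) * cosh (k' * s)) := by
    intro x
    rcases le_total (s ^ 2) (x ^ 2) with h1 | h1
    · exact mul_nonneg (by linarith) (by linarith [cosh_mul_cosh_le hk hkk h1])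
    · exact mul_nonneg_of_nonpos_of_nonpos (by linarith) (by linarith [cosh_mul_cosh_le hk hkk h1])
  have hinteg : 0 ≤ ∫ σ, ((σ i) ^ 2 - s ^ 2) * (cosh (k' * σ i) * cosh (k * s)
      - cosh (k * σ i) * cosh (k' * s)) ∂μ := integral_nonneg fun σ => hpt _
  have hexp : ∫ σ, ((σ i) ^ 2 - s ^ 2) * (cosh (k' * σ i) * cosh (k * s)
      - cosh (k * σ i) * cosh (k' * s)) ∂μ
      = cosh (k * s) * ((∫ σ, (σ i) ^ 2 * cosh (k' * σ i) ∂μ)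
          - s ^ 2 * ∫ σ, cosh (k' * σ i) ∂μ) - cosh (k' * s) * (A - s ^ 2 * B) := by
    rw [hA, hB, ← integral_const_mul, ← integral_const_mul, ← integral_sub
      (h.integrable (by fun_prop)) (h.integrable (by fun_prop)), ← integral_sub
      (h.integrable (by fun_prop)) (h.integrable (by fun_prop)), ← integral_const_mul,
      ← integral_const_mul, ← integral_sub
      (h.integrable (by fun_prop)) (h.integrable (by fun_prop))]
    congr 1; ext σ; ring
  have h0 : A - s ^ 2 * B = 0 := by rw [hs2]; field_simp; ring
  rw [hexp, h0, mul_zero, sub_zero] at hinteg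
  have := nonneg_of_mul_nonneg_right hinteg (cosh_pos _)
  rw [hs2] at this
  rw [sub_nonneg, div_mul_eq_mul_div, div_le_iff₀ hZ] at this
  exact this

lemma antitoneOn_tanh_div {k k' : ℝ} (hk : 0 < k) (hkk : k ≤ k') :
    k * (sinh k' * cosh k) ≤ k' * (sinh k * cosh k') := by
  have hc : ConvexOn ℝ (Set.Ici 0) sinh := by
    refine MonotoneOn.convexOn_of_deriv (convex_Ici 0) continuous_sinh.continuousOn
      differentiable_sinh.differentiableOn ?_
    rw [Real.deriv_sinh, interior_Ici]
    intro x hx y hy hxy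
    rw [cosh_le_cosh, abs_of_pos hx, abs_of_pos hy]; exact hxy
  have hpos : 0 < k' + k := by linarith
  have h1 := hc.2 (show (0 : ℝ) ∈ Set.Ici 0 by simp)
    (show k' + k ∈ Set.Ici 0 from hpos.le) (show 0 ≤ 2 * k / (k' + k) by positivity)
    (show 0 ≤ (k' - k) / (k' + k) from div_nonneg (by linarith) (by linarith))
    (by field_simp; ring)
  simp only [smul_eq_mul, mul_zero, sinh_zero, zero_add, div_mul_cancel₀ _ hpos.ne'] at h1
  rw [div_mul_eq_mul_div, le_div_iff₀ hpos, sinh_sub, sinh_add] at h1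
  linarith

lemma sinh_le_mul_cosh {k : ℝ} (hk : 0 < k) : sinh k ≤ k * cosh k := by
  have := (convex_Icc 0 k).image_sub_le_mul_sub_of_deriv_le (f := sinh) (C := cosh k)
    continuous_sinh.continuousOn differentiable_sinh.differentiableOn (by
      rw [Real.deriv_sinh, interior_Icc]
      intro x hx
      rw [cosh_le_cosh, abs_of_pos hx.1, abs_of_pos hk]; exact hx.2.le) 0 (by simp [hk.le]) k
      (by simp [hk.le]) hk.le
  simp only [sinh_zero, sub_zero] at this
  linarith

/-- With `Z(k) = ∫ e^{kσᵢ}`, the ratio `Z'(k) / (k Z(k))` is antitone on `k > 0` and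
at most `1 / n`. -/
lemma first_moment_ratio [IsProbabilityMeasure μ] (h : IsUniformSphere μ) (i : Fin n) :
    (∀ k k' : ℝ, 0 < k → k ≤ k' →
      k * (∫ σ, σ i * exp (k' * σ i) ∂μ) * (∫ σ, exp (k * σ i) ∂μ)
        ≤ k' * (∫ σ, σ i * exp (k * σ i) ∂μ) * ∫ σ, exp (k' * σ i) ∂μ) ∧
    ∀ k : ℝ, 0 < k → n * (∫ σ, σ i * exp (k * σ i) ∂μ) ≤ k * ∫ σ, exp (k * σ i) ∂μ := by
  have hn : 1 ≤ n := by have := i.2; omega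
  rcases hn.eq_or_lt with h1 | h1
  · have hZ : ∀ k : ℝ, ∫ σ, exp (k * σ i) ∂μ = cosh k := by
      intro k
      have e := h.integral_even_mul_exp i (f := fun _ => 1) (by fun_prop) (by simp) k
      simp only [one_mul] at e
      rw [e]
      have : ∀ᵐ σ ∂μ, cosh (k * σ i) = cosh k := by
        filter_upwards [h.ae_norm] with σ hσ
        have h3 : ∑ j, (σ j) ^ 2 = (1 : ℝ) := by
          rw [← EuclideanSpace.real_norm_sq_eq, hσ]; norm_num
        subst h1
        rw [Fin.sum_univ_one, ← Subsingleton.elim i 0] at h3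
        rcases (sq_eq_one_iff (a := σ i)).1 h3 with h4 | h4 <;> simp [h4]
      rw [integral_congr_ae this]; simp
    have hP : ∀ k : ℝ, ∫ σ, σ i * exp (k * σ i) ∂μ = sinh k := by
      intro k
      have hd := h.hasDerivAt_integral_exp (p := fun _ => 1) (X := fun σ => σ i) (by fun_prop)
        (by fun_prop) k
      simp only [one_mul, hZ] at hd
      exact hd.unique (hasDerivAt_cosh k)
    refine ⟨fun k k' hk hkk => ?_, fun k hk => ?_⟩
    · rw [hP, hP, hZ, hZ]
      linarith [antitoneOn_tanh_div hk hkk]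
    · have hn1 : (n : ℝ) = 1 := by exact_mod_cast h1.symm
      rw [hP, hZ, hn1, one_mul]
      exact sinh_le_mul_cosh hk
  · have hn1 : (0 : ℝ) < n - 1 := by
      have : (1 : ℝ) < n := by exact_mod_cast h1
      linarith
    have hI : ∀ k : ℝ, k * ((∫ σ, exp (k * σ i) ∂μ) - ∫ σ, (σ i) ^ 2 * exp (k * σ i) ∂μ)
        = (n - 1) * ∫ σ, σ i * exp (k * σ i) ∂μ := by
      intro k
      rw [← h.integral_one_sub_sq_mul_exp i k, ← integral_sub
      (h.integrable (by fun_prop)) (h.integrable (by fun_prop))]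
      congr 2; ext σ; ring
    refine ⟨fun k k' hk hkk => ?_, fun k hk => ?_⟩
    · refine le_of_mul_le_mul_left ?_ hn1
      have hc := h.chebyshev i hk.le hkk
      have e1 := hI k
      have e2 := hI k'
      generalize (∫ σ, σ i * exp (k * σ i) ∂μ) = P at *
      generalize (∫ σ, σ i * exp (k' * σ i) ∂μ) = P' at *
      generalize (∫ σ, exp (k * σ i) ∂μ) = Z at *
      generalize (∫ σ, exp (k' * σ i) ∂μ) = Z' at *
      generalize (∫ σ, (σ i) ^ 2 * exp (k * σ i) ∂μ) = S at *
      generalize (∫ σ, (σ i) ^ 2 * exp (k' * σ i) ∂μ) = S' at *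
      calc ((n : ℝ) - 1) * (k * P' * Z) = k * k' * (Z' - S') * Z := by
            linear_combination (-k * Z) * e2
        _ ≤ k * k' * (Z - S) * Z' := by
            have : 0 ≤ k * k' := mul_nonneg hk.le (hk.le.trans hkk)
            nlinarith [mul_nonneg this (sub_nonneg.2 hc)]
        _ = _ := by linear_combination (k' * Z') * e1
    · refine le_of_mul_le_mul_left ?_ hn1
      have hc := h.chebyshev i le_rfl hk.le
      have e1 := hI k
      simp only [zero_mul, exp_zero, mul_one, h.integral_coord_sq i] at hc
      simp only [integral_const, probReal_univ, smul_eq_mul, mul_one] at hc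
      generalize (∫ σ, σ i * exp (k * σ i) ∂μ) = P at *
      generalize (∫ σ, exp (k * σ i) ∂μ) = Z at *
      generalize (∫ σ, (σ i) ^ 2 * exp (k * σ i) ∂μ) = S at *
      have hn0 : (0 : ℝ) < n := by linarith
      have h2 : Z ≤ n * S := by
        rw [one_div, inv_mul_le_iff₀ hn0] at hc; exact hc
      calc ((n : ℝ) - 1) * (n * P) = n * k * (Z - S) := by linear_combination (-(n : ℝ)) * e1
        _ ≤ ((n : ℝ) - 1) * (k * Z) := by nlinarith [mul_le_mul_of_nonneg_left h2 hk.le]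

/-- `log ∫ e^{⟪h,σ⟫} dμ` is `L(‖h‖²)` with `L` concave and `1/(2n)`-Lipschitz, which bounds its
failure of concavity by `‖x - y‖² / (2n)`. -/
theorem logLaplace_semiconcave [IsProbabilityMeasure μ] (h : IsUniformSphere μ) (hn : 1 ≤ n)
    {t s : ℝ} (ht : 0 < t) (hs : 0 < s) (hts : t + s = 1) (x y : EuclideanSpace ℝ (Fin n)) :
    t * log (∫ σ, exp ⟪x, σ⟫ ∂μ) + s * log (∫ σ, exp ⟪y, σ⟫ ∂μ)
      ≤ log (∫ σ, exp ⟪t • x + s • y, σ⟫ ∂μ) + t * s * ‖x - y‖ ^ 2 / (2 * n) := by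
  let i : Fin n := ⟨0, hn⟩
  have hn0 : (0 : ℝ) < n := by exact_mod_cast hn
  set Z : ℝ → ℝ := fun k => ∫ σ, exp (k * σ i) ∂μ with hZ
  set P : ℝ → ℝ := fun k => ∫ σ, σ i * exp (k * σ i) ∂μ with hP
  have hZpos : ∀ k, 0 < Z k := fun k => integral_exp_pos (h.integrable (by fun_prop))
  have hZd : ∀ k, HasDerivAt Z (P k) k := by
    intro k
    have hd := h.hasDerivAt_integral_exp (p := fun _ => 1) (X := fun σ => σ i) (by fun_prop)
        (by fun_prop) k
    simpa only [one_mul] using hd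
  set L : ℝ → ℝ := fun u => log (Z (√u)) with hL
  have hZc : Continuous Z := continuous_iff_continuousAt.2 fun k => (hZd k).continuousAt
  have hLc : Continuous L := (hZc.comp continuous_sqrt).log fun u => (hZpos _).ne'
  have hLd : ∀ u : ℝ, 0 < u → HasDerivAt L (P (√u) / (√u * Z (√u)) / 2) u := by
    intro u hu
    have h1 := ((hZd (√u)).comp u (hasDerivAt_sqrt hu.ne')).log (hZpos _).ne'
    have h2 : P (√u) / (√u * Z (√u)) / 2 = P (√u) * (1 / (2 * √u)) / (Z ∘ sqrt) u := by
      have := sqrt_pos.2 hu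
      have := hZpos (√u)
      simp only [Function.comp]
      field_simp
    rw [h2]
    exact h1
  obtain ⟨hr1, hr2⟩ := h.first_moment_ratio i
  have hconc : ConcaveOn ℝ (Set.Ici 0) L := by
    refine AntitoneOn.concaveOn_of_deriv (convex_Ici 0) hLc.continuousOn ?_ ?_
    · rw [interior_Ici]
      exact fun u hu => (hLd u hu).differentiableAt.differentiableWithinAt
    · rw [interior_Ici]
      intro u hu v hv huv
      rw [(hLd u hu).deriv, (hLd v hv).deriv]
      have h1 := sqrt_pos.2 (show 0 < u from hu)
      have h2 := sqrt_pos.2 (show 0 < v from hv)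
      have := hr1 (√u) (√v) h1 (sqrt_le_sqrt huv)
      refine div_le_div_of_nonneg_right ?_ zero_le_two
      rw [div_le_div_iff₀ (mul_pos h2 (hZpos _)) (mul_pos h1 (hZpos _))]
      simp only [hP, hZ] at *
      linarith
  have hlip : ∀ u v : ℝ, 0 ≤ u → u ≤ v → L v - L u ≤ 1 / (2 * n) * (v - u) := by
    intro u v hu huv
    refine (convex_Ici (0 : ℝ)).image_sub_le_mul_sub_of_deriv_le hLc.continuousOn ?_ ?_ u hu v
      (hu.trans huv) huv
    · rw [interior_Ici]
      exact fun u hu => (hLd u hu).differentiableAt.differentiableWithinAt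
    · rw [interior_Ici]
      intro w hw
      have h1 := sqrt_pos.2 (show 0 < w from hw)
      have h2 := hZpos (√w)
      rw [(hLd w hw).deriv, div_div, div_le_div_iff₀ (by positivity) (by positivity)]
      have := hr2 (√w) h1
      simp only [hP, hZ] at *
      linarith
  have hLL : ∀ v : EuclideanSpace ℝ (Fin n), log (∫ σ, exp ⟪v, σ⟫ ∂μ) = L (‖v‖ ^ 2) := by
    intro v
    have := h.integral_inner_congr (v := v) (w := ‖v‖ • EuclideanSpace.single i (1 : ℝ))
      (by simp [norm_smul]) exp
    rw [this]
    simp [hL, hZ, inner_smul_left, EuclideanSpace.inner_single_left, sqrt_sq (norm_nonneg v)]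
  rw [hLL, hLL, hLL]
  have hsplit : t * ‖x‖ ^ 2 + s * ‖y‖ ^ 2 = ‖t • x + s • y‖ ^ 2 + t * s * ‖x - y‖ ^ 2 := by
    rw [norm_add_sq_real, norm_sub_sq_real, norm_smul, norm_smul, inner_smul_left,
      inner_smul_right, norm_of_nonneg ht.le, norm_of_nonneg hs.le]
    obtain rfl : s = 1 - t := by linarith
    simp only [conj_trivial]; ring
  have h1 := hconc.2 (show ‖x‖ ^ 2 ∈ Set.Ici 0 from sq_nonneg ‖x‖)
    (show ‖y‖ ^ 2 ∈ Set.Ici 0 from sq_nonneg ‖y‖) ht.le hs.le hts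
  simp only [smul_eq_mul] at h1
  rw [hsplit] at h1
  have h2 := hlip (‖t • x + s • y‖ ^ 2) (‖t • x + s • y‖ ^ 2 + t * s * ‖x - y‖ ^ 2)
    (sq_nonneg _) (le_add_of_nonneg_right (by positivity))
  have h3 : 1 / (2 * n) * (‖t • x + s • y‖ ^ 2 + t * s * ‖x - y‖ ^ 2 - ‖t • x + s • y‖ ^ 2)
      = t * s * ‖x - y‖ ^ 2 / (2 * n) := by ring
  linarith

end IsUniformSphere

/-! ### Entropy on product spaces -/

/-- `f` is measurable and takes values in a compact subinterval of `(0, ∞)`. -/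
def PosBdd {X : Type*} [MeasurableSpace X] (f : X → ℝ) : Prop :=
  Measurable f ∧ ∃ a b, 0 < a ∧ ∀ x, a ≤ f x ∧ f x ≤ b

namespace PosBdd

variable {X Y : Type*} [MeasurableSpace X] [MeasurableSpace Y] {f : X → ℝ}

lemma pos (hf : PosBdd f) (x : X) : 0 < f x := by
  obtain ⟨_, a, b, ha, h⟩ := hf
  exact ha.trans_le (h x).1

lemma bdd (hf : PosBdd f) : ∃ c, ∀ x, |f x| ≤ c := by
  obtain ⟨_, a, b, ha, h⟩ := hf
  exact ⟨b, fun x => by rw [abs_of_pos (ha.trans_le (h x).1)]; exact (h x).2⟩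

lemma log_bdd (hf : PosBdd f) : ∃ c, ∀ x, |log (f x)| ≤ c := by
  obtain ⟨_, a, b, ha, h⟩ := hf
  refine ⟨max (-log a) (log b), fun x => abs_le.2 ⟨?_, ?_⟩⟩
  · have := log_le_log ha (h x).1
    have := le_max_left (-log a) (log b)
    linarith
  · exact (log_le_log (ha.trans_le (h x).1) (h x).2).trans (le_max_right _ _)

lemma integrable (hf : PosBdd f) (m : Measure X) [IsFiniteMeasure m] : Integrable f m := by
  obtain ⟨c, hc⟩ := hf.bdd
  exact integrable_of_measurable_bdd hf.1 c hc

lemma integrable_mul_bdd (hf : PosBdd f) (m : Measure X) [IsFiniteMeasure m] {g : X → ℝ}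
    (hg : Measurable g) (hb : ∃ c, ∀ x, |g x| ≤ c) : Integrable (fun x => f x * g x) m := by
  obtain ⟨c, hc⟩ := hf.bdd
  obtain ⟨d, hd⟩ := hb
  refine integrable_of_measurable_bdd (hf.1.mul hg) (c * d) fun x => ?_
  rw [abs_mul]
  exact mul_le_mul (hc x) (hd x) (abs_nonneg _) ((abs_nonneg _).trans (hc x))

lemma integrable_mul_log (hf : PosBdd f) (m : Measure X) [IsFiniteMeasure m] :
    Integrable (fun x => f x * log (f x)) m :=
  hf.integrable_mul_bdd m hf.1.log hf.log_bdd

lemma mul_log_bdd (hf : PosBdd f) : ∃ c, ∀ x, |f x * log (f x)| ≤ c := by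
  obtain ⟨c, hc⟩ := hf.bdd
  obtain ⟨d, hd⟩ := hf.log_bdd
  refine ⟨c * d, fun x => ?_⟩
  rw [abs_mul]
  exact mul_le_mul (hc x) (hd x) (abs_nonneg _) ((abs_nonneg _).trans (hc x))

lemma integral_mem {a b : ℝ} (hf : Measurable f) (ha : 0 < a) (h : ∀ x, a ≤ f x ∧ f x ≤ b)
    (m : Measure X) [IsProbabilityMeasure m] : a ≤ ∫ x, f x ∂m ∧ ∫ x, f x ∂m ≤ b := by
  have hi := PosBdd.integrable ⟨hf, a, b, ha, h⟩ m
  constructor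
  · simpa using integral_mono (integrable_const a) hi fun x => (h x).1
  · simpa using integral_mono hi (integrable_const b) fun x => (h x).2

lemma integral_pos (hf : PosBdd f) (m : Measure X) [IsProbabilityMeasure m] :
    0 < ∫ x, f x ∂m := by
  obtain ⟨hm, a, b, ha, h⟩ := hf
  exact ha.trans_le (integral_mem hm ha h m).1

lemma comp (hf : PosBdd f) {φ : Y → X} (hφ : Measurable φ) : PosBdd (fun y => f (φ y)) := by
  obtain ⟨hm, a, b, ha, h⟩ := hf
  exact ⟨hm.comp hφ, a, b, ha, fun y => h _⟩

lemma avg {f : X × Y → ℝ} (hf : PosBdd f) (m : Measure Y) [IsProbabilityMeasure m] :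
    PosBdd (fun x => ∫ y, f (x, y) ∂m) := by
  have hm : Measurable fun x => ∫ y, f (x, y) ∂m :=
    (hf.1.stronglyMeasurable.integral_prod_right').measurable
  obtain ⟨hf1, a, b, ha, h⟩ := hf
  exact ⟨hm, a, b, ha, fun x => integral_mem (hf1.comp measurable_prodMk_left) ha
    (fun y => h _) m⟩

end PosBdd

/-- The Gibbs variational principle (upper bound half) for the entropy. -/
lemma entropy_duality {X : Type*} [MeasurableSpace X] {m : Measure X} [IsProbabilityMeasure m]
    {f l : X → ℝ} (hf : PosBdd f) (hfl : Integrable (fun x => f x * l x) m)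
    (hl : Integrable (fun x => exp (l x)) m) :
    ∫ x, f x * l x ∂m ≤ ent m f + (∫ x, f x ∂m) * log (∫ x, exp (l x) ∂m) := by
  have hF := hf.integral_pos m
  have hE : 0 < ∫ x, exp (l x) ∂m := integral_exp_pos hl
  set G := ∫ x, f x ∂m with hG
  set I := ∫ x, exp (l x) ∂m with hI
  have hpt : ∀ x, f x * l x ≤ f x * log (f x) - f x * log (G / I) - f x + G / I * exp (l x) := by
    intro x
    have hfx := hf.pos x
    have hb : 0 < G / I * exp (l x) / f x := by positivity
    have h1 := log_le_sub_one_of_pos hb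
    rw [log_div (by positivity) hfx.ne', log_mul (by positivity) (exp_pos _).ne', log_exp] at h1
    have h2 := mul_le_mul_of_nonneg_left h1 hfx.le
    have h3 : f x * (G / I * exp (l x) / f x - 1) = G / I * exp (l x) - f x := by field_simp
    rw [h3] at h2
    linarith
  have i1 : Integrable (fun x => f x * log (f x)) m := hf.integrable_mul_log m
  have i2 : Integrable (fun x => f x * log (G / I)) m := (hf.integrable m).mul_const _
  have i12 : Integrable (fun x => f x * log (f x) - f x * log (G / I)) m := i1.sub i2
  have i123 : Integrable (fun x => f x * log (f x) - f x * log (G / I) - f x) m :=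
    i12.sub (hf.integrable m)
  have i4 : Integrable (fun x => G / I * exp (l x)) m := hl.const_mul _
  have h1 := integral_mono hfl (i123.add i4) hpt
  simp only [Pi.add_apply] at h1
  rw [integral_add i123 i4, integral_sub i12 (hf.integrable m), integral_sub i1 i2,
    integral_mul_const, integral_const_mul, ← hG, ← hI, log_div hF.ne' hE.ne',
    div_mul_cancel₀ _ hE.ne'] at h1
  rw [ent, ← hG]
  linarith

/-- Hoeffding's lemma for a bounded random variable. -/
lemma hoeffding {X : Type*} [MeasurableSpace X] {m : Measure X} [IsProbabilityMeasure m]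
    {l : X → ℝ} (hl : AEMeasurable l m) {R : ℝ} (hR : ∀ᵐ x ∂m, |l x| ≤ R) :
    ∫ x, exp (l x - ∫ y, l y ∂m) ∂m ≤ exp (R ^ 2 / 2) := by
  have h1 := (ProbabilityTheory.hasSubgaussianMGF_of_mem_Icc (a := -R) (b := R) hl (by
    filter_upwards [hR] with x hx using abs_le.1 hx)).mgf_le 1
  simp only [ProbabilityTheory.mgf, one_mul] at h1
  refine h1.trans (exp_le_exp.2 ?_)
  simp only [one_pow, mul_one]
  rw [NNReal.coe_pow, NNReal.coe_div, coe_nnnorm, norm_eq_abs]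
  apply le_of_eq
  rw [div_pow, sq_abs, NNReal.coe_ofNat]; ring

section Product

variable {ι X : Type*} [Fintype ι] [DecidableEq ι] [MeasurableSpace X]
  (m : ι → Measure X) [∀ i, IsProbabilityMeasure (m i)]

/-- Resampling one coordinate of a product measure leaves it unchanged. -/
lemma map_update_prod (x : ι) :
    ((Measure.pi m).prod (m x)).map (fun p : (ι → X) × X => Function.update p.1 x p.2)
      = Measure.pi m := by
  refine (Measure.pi_eq fun s hs => ?_).symm
  rw [Measure.map_apply measurable_update' (MeasurableSet.univ_pi hs)]
  have : (fun p : (ι → X) × X => Function.update p.1 x p.2) ⁻¹' (Set.univ.pi s)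
      = (Set.univ.pi (Function.update s x Set.univ)) ×ˢ (s x) := by
    ext ⟨σ, ψ⟩
    simp only [Set.mem_preimage, Set.mem_pi, Set.mem_univ, true_imp_iff, Set.mem_prod]
    constructor
    · intro h
      refine ⟨fun i => ?_, by simpa using h x⟩
      by_cases hi : i = x
      · subst hi; simp
      · simpa [Function.update_of_ne hi] using h i
    · rintro ⟨h1, h2⟩ i
      by_cases hi : i = x
      · subst hi; simpa using h2
      · simpa [Function.update_of_ne hi] using h1 i
  rw [this, Measure.prod_prod, Measure.pi_pi]
  rw [← Finset.mul_prod_erase Finset.univ _ (Finset.mem_univ x),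
    ← Finset.mul_prod_erase Finset.univ (fun i => m i (s i)) (Finset.mem_univ x)]
  simp only [Function.update_self, measure_univ, one_mul]
  rw [mul_comm]
  congr 1
  refine Finset.prod_congr rfl fun i hi => ?_
  rw [Function.update_of_ne (Finset.ne_of_mem_erase hi)]

lemma integral_update_prod (x : ι) {g : (ι → X) → ℝ} (hg : Integrable g (Measure.pi m))
    (hgm : Measurable g) :
    Integrable (fun σ => ∫ ψ, g (Function.update σ x ψ) ∂m x) (Measure.pi m) ∧
    ∫ σ, (∫ ψ, g (Function.update σ x ψ) ∂m x) ∂Measure.pi m = ∫ σ, g σ ∂Measure.pi m := by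
  have hmp : MeasurePreserving (fun p : (ι → X) × X => Function.update p.1 x p.2)
      ((Measure.pi m).prod (m x)) (Measure.pi m) := ⟨measurable_update', map_update_prod m x⟩
  have hi : Integrable (fun p : (ι → X) × X => g (Function.update p.1 x p.2))
      ((Measure.pi m).prod (m x)) := hmp.integrable_comp_of_integrable hg
  refine ⟨hi.integral_prod_left, ?_⟩
  conv_rhs => rw [← map_update_prod m x]
  rw [integral_map measurable_update'.aemeasurable hgm.aestronglyMeasurable]
  exact (integral_prod _ hi).symm

/-- Average of `g` over the coordinate `x`. -/
noncomputable def siteAvg (x : ι) (g : (ι → X) → ℝ) (σ : ι → X) : ℝ :=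
  ∫ ψ, g (Function.update σ x ψ) ∂m x

lemma PosBdd.siteAvg {g : (ι → X) → ℝ} (hg : PosBdd g) (x : ι) : PosBdd (siteAvg m x g) :=
  PosBdd.avg (f := fun p : (ι → X) × X => g (Function.update p.1 x p.2))
    (hg.comp measurable_update') (m x)

/-- Entropy of `f` as a function of the coordinate `x`, the others being frozen. -/
noncomputable def siteEnt (x : ι) (f : (ι → X) → ℝ) (σ : ι → X) : ℝ :=
  ent (m x) (fun ψ => f (Function.update σ x ψ))

lemma siteEnt_eq (x : ι) (f : (ι → X) → ℝ) (σ : ι → X) : siteEnt m x f σ =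
    siteAvg m x (fun τ => f τ * log (f τ)) σ - siteAvg m x f σ * log (siteAvg m x f σ) := rfl

lemma integrable_siteEnt {f : (ι → X) → ℝ} (hf : PosBdd f) (x : ι) :
    Integrable (siteEnt m x f) (Measure.pi m) := by
  have := (integral_update_prod m x (hf.integrable_mul_log _) (hf.1.mul hf.1.log)).1.sub
    ((hf.siteAvg m x).integrable_mul_log (Measure.pi m))
  exact this

lemma measurable_siteEnt {f : (ι → X) → ℝ} (hf : PosBdd f) (x : ι) :
    Measurable (siteEnt m x f) := by
  have h1 : Measurable (siteAvg m x (fun τ => f τ * log (f τ))) :=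
    (((hf.1.mul hf.1.log).comp measurable_update').stronglyMeasurable.integral_prod_right'
      (f := fun p : (ι → X) × X => f (Function.update p.1 x p.2)
        * log (f (Function.update p.1 x p.2)))).measurable
  have h2 := (hf.siteAvg m x).1
  exact h1.sub (h2.mul h2.log)

lemma siteAvg_update_self (x : ι) (g : (ι → X) → ℝ) (σ : ι → X) (ψ : X) :
    siteAvg m x g (Function.update σ x ψ) = siteAvg m x g σ := by
  simp [siteAvg]

/-- One step of tensorization: replacing `g` by its average over `x` in `∫ f log g` costs at most
the averaged entropy of `f` in the coordinate `x`. -/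
lemma integral_mul_log_siteAvg {f g : (ι → X) → ℝ} (hf : PosBdd f) (hg : PosBdd g) (x : ι) :
    ∫ σ, f σ * log (g σ) ∂Measure.pi m ≤ (∫ σ, siteEnt m x f σ ∂Measure.pi m)
      + ∫ σ, f σ * log (siteAvg m x g σ) ∂Measure.pi m := by
  have hA := hg.siteAvg m x
  have hi1 := hf.integrable_mul_bdd (Measure.pi m) hg.1.log hg.log_bdd
  have hi2 := hf.integrable_mul_bdd (Measure.pi m) hA.1.log hA.log_bdd
  have e1 := integral_update_prod m x (hi1.sub hi2)
    ((hf.1.mul hg.1.log).sub (hf.1.mul hA.1.log))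
  rw [← sub_le_iff_le_add, ← integral_sub hi1 hi2]
  simp only [Pi.sub_apply] at e1
  rw [← e1.2]
  refine integral_mono e1.1 (integrable_siteEnt m hf x) fun σ => ?_
  simp only [siteAvg_update_self]
  have hfu : PosBdd fun ψ => f (Function.update σ x ψ) := hf.comp (measurable_update σ)
  have hgu : PosBdd fun ψ => g (Function.update σ x ψ) := hg.comp (measurable_update σ)
  have hpos := hA.pos σ
  have hexp : ∀ ψ, exp (log (g (Function.update σ x ψ)) - log (siteAvg m x g σ))
      = g (Function.update σ x ψ) / siteAvg m x g σ := by
    intro ψ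
    rw [exp_sub, exp_log (hgu.pos ψ), exp_log hpos]
  have hd := entropy_duality (m := m x) (l := fun ψ => log (g (Function.update σ x ψ))
    - log (siteAvg m x g σ)) hfu (by
      simp only [mul_sub]
      exact (hfu.integrable_mul_bdd _ hgu.1.log hgu.log_bdd).sub
        ((hfu.integrable _).mul_const _)) (by
      simp only [hexp]
      exact (hgu.integrable _).div_const _)
  simp only [hexp, integral_div] at hd
  have h1 : (∫ ψ, g (Function.update σ x ψ) ∂m x) / siteAvg m x g σ = 1 := div_self hpos.ne'
  rw [h1, log_one, mul_zero, add_zero] at hd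
  simp only [mul_sub] at hd
  exact hd

lemma eq_of_forall_update {g : (ι → X) → ℝ} (h : ∀ x σ ψ, g (Function.update σ x ψ) = g σ)
    (σ τ : ι → X) : g σ = g τ := by
  have : ∀ S : Finset ι, g (S.piecewise τ σ) = g σ := by
    intro S
    induction S using Finset.induction with
    | empty => simp
    | insert x S hx ih => rw [Finset.piecewise_insert, h, ih]
  simpa using (this Finset.univ).symm

/-- Tensorization (subadditivity) of entropy for product measures. -/
theorem ent_pi_le {f : (ι → X) → ℝ} (hf : PosBdd f) :
    ent (Measure.pi m) f ≤ ∑ x, ∫ σ, siteEnt m x f σ ∂Measure.pi m := by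
  have key : ∀ l : List ι, ∃ g : (ι → X) → ℝ, PosBdd g ∧
      (∀ x ∈ l, ∀ σ ψ, g (Function.update σ x ψ) = g σ) ∧
      ∫ σ, g σ ∂Measure.pi m = ∫ σ, f σ ∂Measure.pi m ∧
      ∫ σ, f σ * log (f σ) ∂Measure.pi m ≤ (l.map fun x => ∫ σ, siteEnt m x f σ ∂Measure.pi m).sum
        + ∫ σ, f σ * log (g σ) ∂Measure.pi m := by
    intro l
    induction l with
    | nil => exact ⟨f, hf, by simp, rfl, by simp⟩
    | cons y l ih =>
      obtain ⟨g, hg, h1, h2, h3⟩ := ih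
      refine ⟨siteAvg m y g, hg.siteAvg m y, ?_, ?_, ?_⟩
      · intro x hx σ ψ
        by_cases hxy : x = y
        · subst hxy; exact siteAvg_update_self m x g σ ψ
        · have hxl : x ∈ l := by simpa [hxy] using hx
          unfold siteAvg
          congr 1; ext φ
          rw [Function.update_comm hxy, h1 x hxl]
      · rw [← h2]; exact (integral_update_prod m y (hg.integrable _) hg.1).2
      · have := integral_mul_log_siteAvg m hf hg y
        simp only [List.map_cons, List.sum_cons]
        linarith
  obtain ⟨g, hg, h1, h2, h3⟩ := key Finset.univ.toList
  have hconst : ∀ σ, g σ = ∫ τ, f τ ∂Measure.pi m := by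
    intro σ
    rw [← h2]
    rw [integral_congr_ae (Filter.Eventually.of_forall fun τ =>
      eq_of_forall_update (fun x => h1 x (by simp)) τ σ)]
    simp
  rw [Finset.sum_map_toList] at h3
  simp only [hconst, integral_mul_const] at h3
  rw [ent]; linarith

end Product

/-- The covariance of a density with a spin is controlled by the entropy in that spin. -/
theorem norm_cov_sq_le {ι : Type*} [Fintype ι] [DecidableEq ι] {n : ℕ}
    (m : ι → Measure (EuclideanSpace ℝ (Fin n))) [∀ i, IsProbabilityMeasure (m i)]
    (hm : ∀ i, ∀ᵐ ψ ∂m i, ‖ψ‖ = 1) {f : (ι → EuclideanSpace ℝ (Fin n)) → ℝ} (hf : PosBdd f)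
    (x : ι) (C : EuclideanSpace ℝ (Fin n))
    (hC : ∀ e, ⟪e, C⟫ = ∫ σ, f σ * (⟪e, σ x⟫ - ∫ ψ, ⟪e, ψ⟫ ∂m x) ∂Measure.pi m) :
    ‖C‖ ^ 2 ≤ 2 * (∫ σ, f σ ∂Measure.pi m) * ∫ σ, siteEnt m x f σ ∂Measure.pi m := by
  have hG := hf.integral_pos (Measure.pi m)
  have hbound : ∀ e : EuclideanSpace ℝ (Fin n), ⟪e, C⟫ ≤
      (∫ σ, siteEnt m x f σ ∂Measure.pi m) + (∫ σ, f σ ∂Measure.pi m) * (‖e‖ ^ 2 / 2) := by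
    intro e
    set c := ∫ ψ, ⟪e, ψ⟫ ∂m x with hc
    have hae : ∀ᵐ ψ ∂m x, |⟪e, ψ⟫| ≤ ‖e‖ := by
      filter_upwards [hm x] with ψ hψ
      have := abs_real_inner_le_norm e ψ
      rwa [hψ, mul_one] at this
    have haeπ : ∀ᵐ σ ∂Measure.pi m, |⟪e, σ x⟫| ≤ ‖e‖ :=
      (measurePreserving_eval m x).quasiMeasurePreserving.ae hae
    have hgm : Measurable fun σ : ι → EuclideanSpace ℝ (Fin n) => f σ * (⟪e, σ x⟫ - c) :=
      hf.1.mul (by fun_prop)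
    obtain ⟨b, hb⟩ := hf.bdd
    have hgi : Integrable (fun σ : ι → EuclideanSpace ℝ (Fin n) => f σ * (⟪e, σ x⟫ - c))
        (Measure.pi m) := by
      refine Integrable.of_bound hgm.aestronglyMeasurable (b * (‖e‖ + |c|)) ?_
      filter_upwards [haeπ] with σ hσ
      rw [norm_mul, norm_eq_abs, norm_eq_abs]
      refine mul_le_mul (hb σ) ?_ (abs_nonneg _) ((abs_nonneg _).trans (hb σ))
      exact (abs_sub _ _).trans (by linarith)
    have e1 := integral_update_prod m x hgi hgm
    rw [hC, ← hc, ← e1.2]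
    have hA := hf.siteAvg m x
    have hA2 : ∫ σ, siteAvg m x f σ ∂Measure.pi m = ∫ σ, f σ ∂Measure.pi m :=
      (integral_update_prod m x (hf.integrable _) hf.1).2
    rw [← hA2, ← integral_mul_const, ← integral_add (integrable_siteEnt m hf x)
      ((hA.integrable _).mul_const _)]
    refine integral_mono e1.1 ((integrable_siteEnt m hf x).add
      ((hA.integrable _).mul_const _)) fun σ => ?_
    have hfu : PosBdd fun ψ => f (Function.update σ x ψ) := hf.comp (measurable_update σ)
    have hh := hoeffding (m := m x) (l := fun ψ => ⟪e, ψ⟫)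
      (by fun_prop : Measurable fun ψ => ⟪e, ψ⟫).aemeasurable hae
    have hd := entropy_duality (m := m x) (l := fun ψ => ⟪e, ψ⟫ - c) hfu (by
      refine Integrable.of_bound (hfu.1.mul (by fun_prop)).aestronglyMeasurable
        (b * (‖e‖ + |c|)) ?_
      filter_upwards [hae] with ψ hψ
      rw [norm_mul, norm_eq_abs, norm_eq_abs]
      refine mul_le_mul (hb _) ?_ (abs_nonneg _) ((abs_nonneg _).trans (hb σ))
      exact (abs_sub _ _).trans (by linarith)) (by
      refine Integrable.of_bound (by fun_prop : Measurable fun ψ => exp (⟪e, ψ⟫ - c)).aestronglyMeasurable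
        (exp (‖e‖ + |c|)) ?_
      filter_upwards [hae] with ψ hψ
      rw [norm_eq_abs, abs_exp, exp_le_exp]
      have := le_abs_self ⟪e, ψ⟫
      have := neg_abs_le c
      linarith)
    simp only [Function.update_self]
    refine hd.trans ?_
    refine add_le_add le_rfl ?_
    refine mul_le_mul_of_nonneg_left ?_ (hfu.integral_pos _).le
    have hpos : 0 < ∫ ψ, exp (⟪e, ψ⟫ - c) ∂m x := by
      refine integral_exp_pos ?_
      refine Integrable.of_bound (by fun_prop : Measurable fun ψ => exp (⟪e, ψ⟫ - c)).aestronglyMeasurable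
        (exp (‖e‖ + |c|)) ?_
      filter_upwards [hae] with ψ hψ
      rw [norm_eq_abs, abs_exp, exp_le_exp]
      have := le_abs_self ⟪e, ψ⟫
      have := neg_abs_le c
      linarith
    exact (log_le_iff_le_exp hpos).2 hh
  set G := ∫ σ, f σ ∂Measure.pi m with hGdef
  -- the optimal vector in `hbound`
  have h1 := hbound (G⁻¹ • C)
  rw [inner_smul_left, norm_smul, real_inner_self_eq_norm_sq, norm_inv, norm_of_nonneg hG.le,
    conj_trivial] at h1
  have h2 : G * ((G⁻¹ * ‖C‖) ^ 2 / 2) = G⁻¹ * ‖C‖ ^ 2 / 2 := by field_simp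
  rw [h2] at h1
  have h3 : G⁻¹ * ‖C‖ ^ 2 ≤ 2 * ∫ σ, siteEnt m x f σ ∂Measure.pi m := by linarith
  rw [inv_mul_le_iff₀ hG] at h3
  linarith

/-! ### Linear algebra of the coupling -/

section Coupling

variable {Λ : Type*} [Fintype Λ] {n : ℕ}

/-- A real matrix acting on the site index of a spin configuration. -/
noncomputable def siteMul (A : Matrix Λ Λ ℝ) (σ : Λ → EuclideanSpace ℝ (Fin n)) (y : Λ) :
    EuclideanSpace ℝ (Fin n) := ∑ x, A y x • σ x

lemma continuous_siteMul (A : Matrix Λ Λ ℝ) :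
    Continuous (siteMul (n := n) A) := by
  unfold siteMul; fun_prop

lemma siteMul_add (A : Matrix Λ Λ ℝ) (σ τ : Λ → EuclideanSpace ℝ (Fin n)) (y : Λ) :
    siteMul A (σ + τ) y = siteMul A σ y + siteMul A τ y := by
  simp [siteMul, Finset.sum_add_distrib]

lemma siteMul_smul (A : Matrix Λ Λ ℝ) (t : ℝ) (σ : Λ → EuclideanSpace ℝ (Fin n)) (y : Λ) :
    siteMul A (t • σ) y = t • siteMul A σ y := by
  simp only [siteMul, Finset.smul_sum, Pi.smul_apply]
  exact Finset.sum_congr rfl fun x _ => smul_comm _ _ _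

lemma siteMul_sub (A : Matrix Λ Λ ℝ) (σ τ : Λ → EuclideanSpace ℝ (Fin n)) (y : Λ) :
    siteMul A (σ - τ) y = siteMul A σ y - siteMul A τ y := by
  simp [siteMul, smul_sub, Finset.sum_sub_distrib]

lemma sum_inner_siteMul_transpose (Q : Matrix Λ Λ ℝ) (η σ : Λ → EuclideanSpace ℝ (Fin n)) :
    ∑ x, ⟪siteMul Qᵀ η x, σ x⟫ = ∑ y, ⟪η y, siteMul Q σ y⟫ := by
  simp only [siteMul, sum_inner, inner_sum, inner_smul_left, inner_smul_right, transpose_apply,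
    conj_trivial]
  exact Finset.sum_comm

variable [DecidableEq Λ]

lemma sum_norm_siteMul_sq {M Q : Matrix Λ Λ ℝ} {r : ℝ} (hQ : Qᵀ * Q = r • 1 - M)
    (σ : Λ → EuclideanSpace ℝ (Fin n)) :
    ∑ y, ‖siteMul Q σ y‖ ^ 2 = r * ∑ x, ‖σ x‖ ^ 2 - ∑ x, ∑ y, M x y * ⟪σ x, σ y⟫ := by
  have h1 : ∑ y, ‖siteMul Q σ y‖ ^ 2 = ∑ x, ∑ y, (Qᵀ * Q) x y * ⟪σ x, σ y⟫ := by
    simp only [← real_inner_self_eq_norm_sq, siteMul, sum_inner, inner_sum, inner_smul_left,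
      inner_smul_right, conj_trivial, Matrix.mul_apply, transpose_apply, Finset.sum_mul,
      Finset.mul_sum]
    rw [Finset.sum_comm]
    refine Finset.sum_congr rfl fun x _ => ?_
    rw [Finset.sum_comm]
    refine Finset.sum_congr rfl fun y _ => Finset.sum_congr rfl fun z _ => by
      rw [real_inner_comm]; ring
  rw [h1, hQ]
  simp only [Matrix.sub_apply, Matrix.smul_apply, sub_mul, Finset.sum_sub_distrib, smul_eq_mul,
    Matrix.one_apply]
  congr 1
  rw [Finset.mul_sum]
  refine Finset.sum_congr rfl fun x _ => ?_
  rw [Finset.sum_eq_single x]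
  · simp
  · intro y _ hy; simp [hy.symm]
  · simp

lemma quadForm_nonneg {M : Matrix Λ Λ ℝ} (hM : M.PosSemidef)
    (σ : Λ → EuclideanSpace ℝ (Fin n)) : 0 ≤ ∑ x, ∑ y, M x y * ⟪σ x, σ y⟫ := by
  have h1 : ∑ x, ∑ y, M x y * ⟪σ x, σ y⟫
      = ∑ j : Fin n, (fun x => σ x j) ⬝ᵥ M.mulVec (fun x => σ x j) := by
    simp only [dotProduct, mulVec, PiLp.inner_apply, Finset.mul_sum]
    rw [Finset.sum_comm' (t' := Finset.univ) (s' := fun _ => Finset.univ) (by simp)]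
    rw [Finset.sum_comm]
    rw [Finset.sum_comm' (s := Finset.univ (α := Fin n)) (t' := Finset.univ)
      (s' := fun _ => Finset.univ) (by simp)]
    refine Finset.sum_congr rfl fun x _ => ?_
    rw [Finset.sum_comm]
    refine Finset.sum_congr rfl fun j _ => Finset.sum_congr rfl fun y _ => ?_
    simp; ring
  rw [h1]
  refine Finset.sum_nonneg fun j _ => ?_
  simpa using hM.dotProduct_mulVec_nonneg (fun x => σ x j)

lemma sum_norm_siteMul_sq_le {M Q : Matrix Λ Λ ℝ} {r : ℝ} (hM : M.PosSemidef)
    (hQ : Qᵀ * Q = r • 1 - M) (σ : Λ → EuclideanSpace ℝ (Fin n)) :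
    ∑ y, ‖siteMul Q σ y‖ ^ 2 ≤ r * ∑ x, ‖σ x‖ ^ 2 := by
  rw [sum_norm_siteMul_sq hQ]
  linarith [quadForm_nonneg hM σ]

/-- The transpose `Qᵀ` obeys the same operator norm bound as `Q`. -/
lemma sum_norm_siteMul_transpose_sq_le {M Q : Matrix Λ Λ ℝ} {r : ℝ} (hr : 0 < r)
    (hM : M.PosSemidef) (hQ : Qᵀ * Q = r • 1 - M) (η : Λ → EuclideanSpace ℝ (Fin n)) :
    ∑ x, ‖siteMul Qᵀ η x‖ ^ 2 ≤ r * ∑ x, ‖η x‖ ^ 2 := by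
  set h := siteMul Qᵀ η with hh
  have h1 : ∑ x, ‖h x‖ ^ 2 = ∑ y, ⟪η y, siteMul Q h y⟫ := by
    rw [← sum_inner_siteMul_transpose]
    simp [hh]
  have h2 := sum_norm_siteMul_sq_le hM hQ h
  have h3 : ∀ y, 2 * (r * ⟪η y, siteMul Q h y⟫) ≤ r ^ 2 * ‖η y‖ ^ 2 + ‖siteMul Q h y‖ ^ 2 := by
    intro y
    have h4 : 0 ≤ ‖r • η y - siteMul Q h y‖ ^ 2 := by positivity
    rw [norm_sub_sq_real, inner_smul_left, norm_smul, norm_of_nonneg hr.le, conj_trivial] at h4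
    nlinarith
  have h5 := Finset.sum_le_sum fun y (_ : y ∈ Finset.univ) => h3 y
  rw [← Finset.mul_sum, ← Finset.mul_sum, Finset.sum_add_distrib, ← Finset.mul_sum, ← h1] at h5
  have h6 : r * ∑ x, ‖h x‖ ^ 2 ≤ r * (r * ∑ x, ‖η x‖ ^ 2) := by nlinarith
  exact le_of_mul_le_mul_left h6 hr

open scoped MatrixOrder in
lemma exists_factor {M : Matrix Λ Λ ℝ} {r : ℝ} (hMsymm : M.IsSymm)
    (hMr : ∀ v : Λ → ℝ, v ⬝ᵥ M.mulVec v ≤ r * (v ⬝ᵥ v)) :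
    ∃ Q : Matrix Λ Λ ℝ, Qᵀ * Q = r • 1 - M := by
  have hps : (r • (1 : Matrix Λ Λ ℝ) - M).PosSemidef := by
    refine .of_dotProduct_mulVec_nonneg ?_ fun v => ?_
    · rw [IsHermitian, conjTranspose_eq_transpose_of_trivial, transpose_sub, transpose_smul,
        transpose_one, hMsymm]
    · simp only [star_trivial, sub_mulVec, dotProduct_sub, smul_mulVec, one_mulVec,
        dotProduct_smul, smul_eq_mul]
      linarith [hMr v]
  obtain ⟨Q, hQ⟩ := CStarAlgebra.nonneg_iff_eq_star_mul_self.1 hps.nonneg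
  exact ⟨Q, by rw [hQ, star_eq_conjTranspose, conjTranspose_eq_transpose_of_trivial]⟩

lemma pos_of_posDef [Nonempty Λ] {M : Matrix Λ Λ ℝ} {r : ℝ} (hM : M.PosDef)
    (hMr : ∀ v : Λ → ℝ, v ⬝ᵥ M.mulVec v ≤ r * (v ⬝ᵥ v)) : 0 < r := by
  have h1 := hMr 1
  have h2 := hM.dotProduct_mulVec_pos (x := (1 : Λ → ℝ)) one_ne_zero
  simp only [star_trivial] at h2
  have h3 : (0 : ℝ) < (1 : Λ → ℝ) ⬝ᵥ 1 := by
    simp [dotProduct, Fintype.card_pos]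
  by_contra h
  push Not at h
  nlinarith

end Coupling

/-! ### Tilted product measures -/

lemma IsUniformSphere.integrable_exp {n : ℕ} {μ : Measure (EuclideanSpace ℝ (Fin n))}
    [IsProbabilityMeasure μ] (hμ : IsUniformSphere μ) (v : EuclideanSpace ℝ (Fin n)) :
    Integrable (fun σ => exp ⟪v, σ⟫) μ := hμ.integrable (by fun_prop)

lemma IsUniformSphere.isProb_tilted {n : ℕ} {μ : Measure (EuclideanSpace ℝ (Fin n))}
    [IsProbabilityMeasure μ] (hμ : IsUniformSphere μ) (v : EuclideanSpace ℝ (Fin n)) :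
    IsProbabilityMeasure (μ.tilted fun σ => ⟪v, σ⟫) :=
  isProbabilityMeasure_tilted (hμ.integrable_exp v)

lemma pi_tilted {ι X : Type*} [Fintype ι] [MeasurableSpace X] (m : ι → Measure X)
    [∀ i, IsProbabilityMeasure (m i)] (F : ι → X → ℝ)
    (hF : ∀ i, Integrable (fun x => exp (F i x)) (m i)) :
    Measure.pi (fun i => (m i).tilted (F i))
      = (Measure.pi m).tilted (fun σ => ∑ i, F i (σ i)) := by
  have hp : ∀ i, IsProbabilityMeasure ((m i).tilted (F i)) :=
    fun i => isProbabilityMeasure_tilted (hF i)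
  refine Measure.pi_eq fun s hs => ?_
  have hpos : ∀ i, 0 < ∫ x, exp (F i x) ∂m i := fun i => integral_exp_pos (hF i)
  rw [tilted_apply_eq_ofReal_integral' _ (MeasurableSet.univ_pi hs)]
  simp_rw [tilted_apply_eq_ofReal_integral' _ (hs _)]
  rw [← ENNReal.ofReal_prod_of_nonneg fun i _ => integral_nonneg fun x =>
    div_nonneg (exp_pos _).le (hpos i).le]
  congr 1
  rw [Measure.restrict_pi_pi]
  simp only [exp_sum]
  rw [integral_fintype_prod_eq_prod (fun i x => exp (F i x)) (μ := m)]
  simp only [← Finset.prod_div_distrib]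
  exact integral_fintype_prod_eq_prod (fun i x => exp (F i x) / ∫ y, exp (F i y) ∂m i)

/-! ### The Hubbard–Stratonovich decomposition -/

section Decomposition

variable {Λ : Type*} [Fintype Λ] {n : ℕ}

/-- The product of the tilted single-spin measures `μ ^ (v x)`, for a field `v`. -/
noncomputable def fieldMeasure (μ : Measure (EuclideanSpace ℝ (Fin n)))
    (v : Λ → EuclideanSpace ℝ (Fin n)) : Measure (Λ → EuclideanSpace ℝ (Fin n)) :=
  Measure.pi fun x => μ.tilted fun σ => ⟪v x, σ⟫

/-- The potential of the renormalised measure: minus the logarithm of the density, in the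
auxiliary field `η`, of the mixture of the measures `fieldMeasure μ (siteMul Qᵀ η)`. The number
`N` is the normalising constant. -/
noncomputable def renPot (μ : Measure (EuclideanSpace ℝ (Fin n))) (Q : Matrix Λ Λ ℝ) (N : ℝ)
    (η : Λ → EuclideanSpace ℝ (Fin n)) : ℝ :=
  1 / 2 * ∑ y, ‖η y‖ ^ 2 - ∑ x, log (∫ σ, exp ⟪siteMul Qᵀ η x, σ⟫ ∂μ) + log N

/-- The renormalised measure, with density `exp (-renPot)`. -/
noncomputable def renMeasure (μ : Measure (EuclideanSpace ℝ (Fin n))) (Q : Matrix Λ Λ ℝ) (N : ℝ) :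
    Measure (Λ → EuclideanSpace ℝ (Fin n)) :=
  volume.withDensity fun η => ENNReal.ofReal (exp (-renPot μ Q N η))

lemma integrable_gaussian : Integrable
    (fun η : Λ → EuclideanSpace ℝ (Fin n) => exp (-(1 / 2) * ∑ y, ‖η y‖ ^ 2)) volume := by
  have h1 : Integrable (fun v : EuclideanSpace ℝ (Fin n) => exp (-(1 / 2) * ‖v‖ ^ 2)) := by
    have := (GaussianFourier.integrable_cexp_neg_mul_sq_norm_add (V := EuclideanSpace ℝ (Fin n))
      (b := 1 / 2) (by norm_num) 0 0).norm
    refine this.congr (.of_forall fun v => ?_)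
    simp only [Complex.norm_exp]
    congr 1
    simp [← Complex.ofReal_pow]
  have h2 := Integrable.fintype_prod (ι := Λ) (f := fun _ => fun v : EuclideanSpace ℝ (Fin n) =>
    exp (-(1 / 2) * ‖v‖ ^ 2)) (μ := fun _ => volume) fun _ => h1
  refine h2.congr (.of_forall fun η => ?_)
  simp only [← exp_sum, Finset.mul_sum]

lemma gaussian_shift (a η : Λ → EuclideanSpace ℝ (Fin n)) :
    exp (-(1 / 2) * ∑ y, ‖η y‖ ^ 2 + ∑ y, ⟪η y, a y⟫)
      = exp (1 / 2 * ∑ y, ‖a y‖ ^ 2) * exp (-(1 / 2) * ∑ y, ‖(η - a) y‖ ^ 2) := by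
  rw [← exp_add]
  congr 1
  simp only [Pi.sub_apply, norm_sub_sq_real, Finset.sum_add_distrib, Finset.sum_sub_distrib,
    ← Finset.mul_sum]
  ring

lemma integrable_gaussian_shift (a : Λ → EuclideanSpace ℝ (Fin n)) : Integrable
    (fun η : Λ → EuclideanSpace ℝ (Fin n) =>
      exp (-(1 / 2) * ∑ y, ‖η y‖ ^ 2 + ∑ y, ⟪η y, a y⟫)) volume := by
  simp only [gaussian_shift a]
  exact (integrable_gaussian.comp_sub_right a).const_mul _

lemma integral_gaussian_shift (a : Λ → EuclideanSpace ℝ (Fin n)) :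
    ∫ η : Λ → EuclideanSpace ℝ (Fin n), exp (-(1 / 2) * ∑ y, ‖η y‖ ^ 2 + ∑ y, ⟪η y, a y⟫)
      = exp (1 / 2 * ∑ y, ‖a y‖ ^ 2) *
        ∫ η : Λ → EuclideanSpace ℝ (Fin n), exp (-(1 / 2) * ∑ y, ‖η y‖ ^ 2) := by
  simp only [gaussian_shift a]
  rw [integral_const_mul, integral_sub_right_eq_self
    (fun η : Λ → EuclideanSpace ℝ (Fin n) => exp (-(1 / 2) * ∑ y, ‖η y‖ ^ 2)) a]

variable {μ : Measure (EuclideanSpace ℝ (Fin n))} [IsProbabilityMeasure μ]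

lemma IsUniformSphere.fieldMeasure_eq (hμ : IsUniformSphere μ)
    (v : Λ → EuclideanSpace ℝ (Fin n)) :
    fieldMeasure μ v = (Measure.pi fun _ : Λ => μ).tilted fun σ => ∑ x, ⟪v x, σ x⟫ :=
  pi_tilted _ (fun x σ => ⟪v x, σ⟫) fun x => hμ.integrable_exp (v x)

lemma IsUniformSphere.isProb_fieldMeasure (hμ : IsUniformSphere μ)
    (v : Λ → EuclideanSpace ℝ (Fin n)) : IsProbabilityMeasure (fieldMeasure μ v) := by
  have := fun x => hμ.isProb_tilted (v x)
  unfold fieldMeasure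
  infer_instance

lemma IsUniformSphere.ae_pi (hμ : IsUniformSphere μ) :
    ∀ᵐ σ ∂(Measure.pi fun _ : Λ => μ), ∀ x, ‖σ x‖ = 1 := by
  rw [ae_all_iff]
  intro x
  exact (measurePreserving_eval (fun _ : Λ => μ) x).quasiMeasurePreserving.ae hμ.ae_norm

lemma integral_exp_field (v : Λ → EuclideanSpace ℝ (Fin n)) :
    ∫ σ, exp (∑ x, ⟪v x, σ x⟫) ∂(Measure.pi fun _ : Λ => μ)
      = ∏ x, ∫ σ, exp ⟪v x, σ⟫ ∂μ := by
  simp only [exp_sum]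
  exact integral_fintype_prod_eq_prod (fun x σ => exp ⟪v x, σ⟫)

lemma IsUniformSphere.integral_fieldMeasure (hμ : IsUniformSphere μ)
    (v : Λ → EuclideanSpace ℝ (Fin n)) (f : (Λ → EuclideanSpace ℝ (Fin n)) → ℝ) :
    ∫ σ, f σ ∂fieldMeasure μ v
      = (∫ σ, f σ * exp (∑ x, ⟪v x, σ x⟫) ∂(Measure.pi fun _ : Λ => μ))
        / ∏ x, ∫ σ, exp ⟪v x, σ⟫ ∂μ := by
  rw [hμ.fieldMeasure_eq, integral_tilted, integral_exp_field, ← integral_div]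
  refine integral_congr_ae (.of_forall fun σ => ?_)
  simp only [smul_eq_mul]; ring

lemma IsUniformSphere.continuous_laplace (hμ : IsUniformSphere μ) :
    Continuous fun v : EuclideanSpace ℝ (Fin n) => ∫ σ, exp ⟪v, σ⟫ ∂μ := by
  refine continuous_iff_continuousAt.2 fun v => ?_
  refine continuousAt_of_dominated (bound := fun _ => exp (‖v‖ + 1)) ?_ ?_ (integrable_const _) ?_
  · exact .of_forall fun w => (by fun_prop : Continuous fun σ => exp ⟪w, σ⟫).aestronglyMeasurable
  · filter_upwards [Metric.ball_mem_nhds v one_pos] with w hw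
    filter_upwards [hμ.ae_norm] with σ hσ
    rw [norm_of_nonneg (exp_pos _).le, exp_le_exp]
    have h1 := real_inner_le_norm w σ
    have h2 := norm_le_norm_add_norm_sub' w v
    rw [mem_ball_iff_norm] at hw
    rw [hσ] at h1
    linarith
  · exact .of_forall fun σ => by fun_prop

lemma IsUniformSphere.laplace_pos (hμ : IsUniformSphere μ) (v : EuclideanSpace ℝ (Fin n)) :
    0 < ∫ σ, exp ⟪v, σ⟫ ∂μ := integral_exp_pos (hμ.integrable_exp v)

lemma IsUniformSphere.continuous_renPot (hμ : IsUniformSphere μ) (Q : Matrix Λ Λ ℝ) (N : ℝ) :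
    Continuous (renPot μ Q N) := by
  unfold renPot
  have h1 : ∀ x, Continuous fun η : Λ → EuclideanSpace ℝ (Fin n) =>
      log (∫ σ, exp ⟪siteMul Qᵀ η x, σ⟫ ∂μ) := fun x =>
    (hμ.continuous_laplace.comp ((continuous_apply x).comp (continuous_siteMul Qᵀ))).log
      fun η => (hμ.laplace_pos _).ne'
  have h2 := continuous_finsetSum Finset.univ fun x _ => h1 x
  fun_prop

lemma IsUniformSphere.exp_neg_renPot (hμ : IsUniformSphere μ) (Q : Matrix Λ Λ ℝ) {N : ℝ}
    (hN : 0 < N) (η : Λ → EuclideanSpace ℝ (Fin n)) : exp (-renPot μ Q N η)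
      = exp (-(1 / 2) * ∑ y, ‖η y‖ ^ 2) * (∏ x, ∫ σ, exp ⟪siteMul Qᵀ η x, σ⟫ ∂μ) / N := by
  have : -renPot μ Q N η = -(1 / 2) * ∑ y, ‖η y‖ ^ 2
      + ∑ x, log (∫ σ, exp ⟪siteMul Qᵀ η x, σ⟫ ∂μ) - log N := by
    unfold renPot; ring
  rw [this, exp_sub, exp_log hN, exp_add, exp_sum]
  congr 3
  ext x
  rw [exp_log (hμ.laplace_pos _)]

lemma integral_renMeasure (hμ : IsUniformSphere μ) (Q : Matrix Λ Λ ℝ) (N : ℝ)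
    (g : (Λ → EuclideanSpace ℝ (Fin n)) → ℝ) :
    ∫ η, g η ∂renMeasure μ Q N = ∫ η, exp (-renPot μ Q N η) * g η := by
  have hc := hμ.continuous_renPot Q N
  unfold renMeasure
  rw [integral_withDensity_eq_integral_toReal_smul (by fun_prop) (.of_forall fun _ => by simp)]
  refine integral_congr_ae (.of_forall fun η => ?_)
  simp [ENNReal.toReal_ofReal (exp_pos _).le]

lemma IsUniformSphere.measurable_integral_fieldMeasure (hμ : IsUniformSphere μ)
    (Q : Matrix Λ Λ ℝ)
    {f : (Λ → EuclideanSpace ℝ (Fin n)) → ℝ} (hf : Measurable f) :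
    Measurable fun η => ∫ σ, f σ ∂fieldMeasure μ (siteMul Qᵀ η) := by
  simp only [hμ.integral_fieldMeasure]
  have hs := continuous_siteMul (n := n) Qᵀ
  refine Measurable.div ?_ ?_
  · have : Measurable fun p : (Λ → EuclideanSpace ℝ (Fin n)) × (Λ → EuclideanSpace ℝ (Fin n)) =>
        f p.2 * exp (∑ x, ⟪siteMul Qᵀ p.1 x, p.2 x⟫) := by
      refine (hf.comp measurable_snd).mul (Continuous.measurable ?_)
      fun_prop
    exact this.stronglyMeasurable.integral_prod_right'.measurable
  · refine Finset.measurable_prod _ fun x _ => ?_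
    exact (hμ.continuous_laplace.comp ((continuous_apply x).comp hs)).measurable

variable [DecidableEq Λ]

/-- The normalising constant for which `renMeasure` is a probability measure. -/
noncomputable def renNorm (μ : Measure (EuclideanSpace ℝ (Fin n))) (M : Matrix Λ Λ ℝ) (r : ℝ) :
    ℝ :=
  (∫ η : Λ → EuclideanSpace ℝ (Fin n), exp (-(1 / 2) * ∑ y, ‖η y‖ ^ 2)) *
    exp (1 / 2 * (r * Fintype.card Λ)) *
    ∫ σ, exp (-(1 / 2) * ∑ x, ∑ y, M x y * ⟪σ x, σ y⟫) ∂(Measure.pi fun _ : Λ => μ)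

/-- Since unit spins have `∑ ‖σ x‖² = |Λ|`, the coupling `-M` may be replaced by `r - M = QᵀQ`. -/
lemma exp_quad_ae_eq (hμ : IsUniformSphere μ) {M Q : Matrix Λ Λ ℝ} {r : ℝ}
    (hQ : Qᵀ * Q = r • 1 - M) : ∀ᵐ σ ∂(Measure.pi fun _ : Λ => μ),
      exp (1 / 2 * ∑ y, ‖siteMul Q σ y‖ ^ 2) = exp (1 / 2 * (r * Fintype.card Λ)) *
        exp (-(1 / 2) * ∑ x, ∑ y, M x y * ⟪σ x, σ y⟫) := by
  filter_upwards [hμ.ae_pi] with σ hσ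
  rw [sum_norm_siteMul_sq hQ, ← exp_add]
  simp [hσ]
  ring

lemma integrable_gibbs {M : Matrix Λ Λ ℝ} (hM : M.PosSemidef) :
    Integrable (fun σ => exp (-(1 / 2) * ∑ x, ∑ y, M x y * ⟪σ x, σ y⟫))
      (Measure.pi fun _ : Λ => μ) := by
  refine integrable_of_measurable_bdd (Continuous.measurable (by fun_prop)) 1 fun σ => ?_
  rw [abs_of_pos (exp_pos _), exp_le_one_iff]
  linarith [quadForm_nonneg hM σ]

lemma renNorm_pos {M : Matrix Λ Λ ℝ} (hM : M.PosSemidef) (r : ℝ) :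
    0 < renNorm μ M r := by
  have h1 := integral_exp_pos (integrable_gaussian (Λ := Λ) (n := n))
  have h2 := integral_exp_pos (integrable_gibbs (μ := μ) hM)
  unfold renNorm
  positivity

/-- The Gibbs measure is the mixture, over the renormalised measure, of the product measures with
external field `siteMul Qᵀ η`. -/
theorem integral_gibbs_eq (hμ : IsUniformSphere μ) {M Q : Matrix Λ Λ ℝ} {r : ℝ}
    (hM : M.PosSemidef) (hQ : Qᵀ * Q = r • 1 - M)
    {f : (Λ → EuclideanSpace ℝ (Fin n)) → ℝ} (hf : Measurable f) {c : ℝ} (hc : ∀ σ, |f σ| ≤ c) :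
    ∫ σ, f σ ∂((Measure.pi fun _ : Λ => μ).tilted
        fun σ => -(1 / 2) * ∑ x, ∑ y, M x y * ⟪σ x, σ y⟫)
      = ∫ η, ∫ σ, f σ ∂fieldMeasure μ (siteMul Qᵀ η) ∂renMeasure μ Q (renNorm μ M r) := by
  set N := renNorm μ M r with hN
  have hNpos : 0 < N := renNorm_pos hM r
  set P := Measure.pi fun _ : Λ => μ with hP
  set V : (Λ → EuclideanSpace ℝ (Fin n)) → ℝ :=
    fun σ => -(1 / 2) * ∑ x, ∑ y, M x y * ⟪σ x, σ y⟫ with hV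
  set c0 := ∫ η : Λ → EuclideanSpace ℝ (Fin n), exp (-(1 / 2) * ∑ y, ‖η y‖ ^ 2) with hc0
  set k : (Λ → EuclideanSpace ℝ (Fin n)) → (Λ → EuclideanSpace ℝ (Fin n)) → ℝ := fun η σ =>
    exp (-(1 / 2) * ∑ y, ‖η y‖ ^ 2 + ∑ y, ⟪η y, siteMul Q σ y⟫) with hk
  have hs := continuous_siteMul (n := n) Q
  have hkm : Measurable fun p : (Λ → EuclideanSpace ℝ (Fin n)) × (Λ → EuclideanSpace ℝ (Fin n)) =>
      f p.2 * k p.1 p.2 :=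
    (hf.comp measurable_snd).mul (Continuous.measurable (by fun_prop))
  have hexp := exp_quad_ae_eq hμ hQ
  rw [← hP] at hexp
  have hinteg : Integrable (fun p : (Λ → EuclideanSpace ℝ (Fin n)) ×
      (Λ → EuclideanSpace ℝ (Fin n)) => f p.2 * k p.1 p.2) (volume.prod P) := by
    rw [integrable_prod_iff' hkm.aestronglyMeasurable]
    refine ⟨.of_forall fun σ =>
      (integrable_gaussian_shift (siteMul Q σ)).const_mul (f σ), ?_⟩
    have h1 : ∀ σ, ∫ η, ‖f σ * k η σ‖ = |f σ| * (exp (1 / 2 * ∑ y, ‖siteMul Q σ y‖ ^ 2) * c0) := by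
      intro σ
      simp only [norm_mul, hk, norm_eq_abs, abs_exp]
      rw [integral_const_mul, integral_gaussian_shift]
    simp only [h1]
    have h2 : Integrable (fun σ => |f σ| * (exp (1 / 2 * (r * Fintype.card Λ)) * exp (V σ) * c0))
        P := by
      refine Integrable.bdd_mul (c := c) ?_ hf.abs.aestronglyMeasurable (.of_forall fun σ => ?_)
      · exact ((integrable_gibbs (μ := μ) hM).const_mul _).mul_const _
      · simpa using hc σ
    refine h2.congr ?_
    filter_upwards [hexp] with σ hσ
    rw [hσ]
  rw [integral_renMeasure hμ]
  have h3 : ∀ η, exp (-renPot μ Q N η) * ∫ σ, f σ ∂fieldMeasure μ (siteMul Qᵀ η)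
      = (∫ σ, f σ * k η σ ∂P) / N := by
    intro η
    rw [hμ.exp_neg_renPot Q hNpos, hμ.integral_fieldMeasure, ← hP]
    have hz : (∏ x, ∫ σ, exp ⟪siteMul Qᵀ η x, σ⟫ ∂μ) ≠ 0 :=
      (Finset.prod_pos fun x _ => hμ.laplace_pos _).ne'
    have : ∫ σ, f σ * k η σ ∂P = exp (-(1 / 2) * ∑ y, ‖η y‖ ^ 2) *
        ∫ σ, f σ * exp (∑ x, ⟪siteMul Qᵀ η x, σ x⟫) ∂P := by
      rw [← integral_const_mul]
      refine integral_congr_ae (.of_forall fun σ => ?_)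
      simp only [hk, exp_add, sum_inner_siteMul_transpose]
      ring
    rw [this]
    field_simp
  simp only [h3]
  rw [integral_div, integral_integral_swap hinteg]
  have h4 : ∫ σ, ∫ η, f σ * k η σ ∂volume ∂P
      = c0 * exp (1 / 2 * (r * Fintype.card Λ)) * ∫ σ, f σ * exp (V σ) ∂P := by
    rw [← integral_const_mul]
    refine integral_congr_ae ?_
    filter_upwards [hexp] with σ hσ
    simp only [hk]
    rw [integral_const_mul, integral_gaussian_shift, hσ]
    ring
  rw [h4, integral_tilted]
  have hc0p : 0 < c0 := integral_exp_pos (integrable_gaussian (Λ := Λ) (n := n))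
  have hZ : 0 < ∫ σ, exp (V σ) ∂P := integral_exp_pos (integrable_gibbs (μ := μ) hM)
  have h5 : ∫ σ, (exp (V σ) / ∫ σ, exp (V σ) ∂P) • f σ ∂P
      = (∫ σ, f σ * exp (V σ) ∂P) / ∫ σ, exp (V σ) ∂P := by
    rw [← integral_div]
    refine integral_congr_ae (.of_forall fun σ => ?_)
    simp only [smul_eq_mul]; ring
  have hN' : N = c0 * exp (1 / 2 * (r * Fintype.card Λ)) * ∫ σ, exp (V σ) ∂P := rfl
  have := exp_pos (1 / 2 * (r * Fintype.card Λ))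
  rw [h5, hN']
  clear_value c0 V P N
  field_simp

lemma isProb_renMeasure (hμ : IsUniformSphere μ) {M Q : Matrix Λ Λ ℝ} {r : ℝ}
    (hM : M.PosSemidef) (hQ : Qᵀ * Q = r • 1 - M) :
    IsProbabilityMeasure (renMeasure μ Q (renNorm μ M r)) := by
  have h1 := integral_gibbs_eq hμ hM hQ (f := fun _ => 1) measurable_const (c := 1) (by simp)
  have := hμ.isProb_fieldMeasure (Λ := Λ)
  have : IsProbabilityMeasure ((Measure.pi fun _ : Λ => μ).tilted
        fun σ => -(1 / 2) * ∑ x, ∑ y, M x y * ⟪σ x, σ y⟫) :=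
    isProbabilityMeasure_tilted (integrable_gibbs (μ := μ) hM)
  simp only [integral_const, probReal_univ, smul_eq_mul, mul_one] at h1
  refine ⟨?_⟩
  rw [measureReal_def] at h1
  rw [← ENNReal.toReal_eq_one_iff]
  exact h1.symm

/-- Strong convexity of the renormalised potential: the Gaussian part has convexity `1`, and the
single-spin log-Laplace transforms lose at most `r / n`. -/
lemma renPot_convex (hμ : IsUniformSphere μ) (hn : 1 ≤ n) {M Q : Matrix Λ Λ ℝ} {r : ℝ}
    (hr : 0 < r) (hM : M.PosSemidef) (hQ : Qᵀ * Q = r • 1 - M) (N : ℝ) {t s : ℝ} (ht : 0 < t)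
    (hs : 0 < s) (hts : t + s = 1) (x y : Λ → EuclideanSpace ℝ (Fin n)) :
    renPot μ Q N (t • x + s • y) ≤ t * renPot μ Q N x + s * renPot μ Q N y
      - (1 - r / n) / 2 * t * s * ∑ i, ‖x i - y i‖ ^ 2 := by
  have h1 := Finset.sum_le_sum fun i (_ : i ∈ Finset.univ) =>
    hμ.logLaplace_semiconcave hn ht hs hts (siteMul Qᵀ x i) (siteMul Qᵀ y i)
  have h2 := sum_norm_siteMul_transpose_sq_le hr hM hQ (x - y)
  simp only [Finset.sum_add_distrib, ← Finset.mul_sum, ← Finset.sum_div] at h1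
  simp only [siteMul_sub, Pi.sub_apply] at h2
  have h3 : ∑ i, ‖(t • x + s • y) i‖ ^ 2
      = t * ∑ i, ‖x i‖ ^ 2 + s * ∑ i, ‖y i‖ ^ 2 - t * s * ∑ i, ‖x i - y i‖ ^ 2 := by
    simp only [Finset.mul_sum, ← Finset.sum_add_distrib, ← Finset.sum_sub_distrib]
    refine Finset.sum_congr rfl fun i _ => ?_
    simp only [Pi.add_apply, Pi.smul_apply]
    rw [norm_add_sq_real, norm_sub_sq_real, norm_smul, norm_smul, inner_smul_left,
      inner_smul_right, norm_of_nonneg ht.le, norm_of_nonneg hs.le]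
    obtain rfl : s = 1 - t := by linarith
    simp only [conj_trivial]; ring
  have hn' : (0 : ℝ) < n := by exact_mod_cast hn
  have h4 : (t * s * ∑ i, ‖siteMul Qᵀ x i - siteMul Qᵀ y i‖ ^ 2) / (2 * n)
      ≤ t * s * (r * ∑ i, ‖x i - y i‖ ^ 2) / (2 * n) := by
    gcongr
  have h5 : t * s * (r * ∑ i, ‖x i - y i‖ ^ 2) / (2 * n)
    = (r / n) / 2 * t * s * ∑ i, ‖x i - y i‖ ^ 2 := by ring
  have h6 : t * log N + s * log N = log N := by rw [← add_mul, hts, one_mul]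
  simp only [renPot, siteMul_add, siteMul_smul]
  rw [h3]
  linarith

end Decomposition

/-! ### Entropy of the Gibbs measure -/

/-- Second order upper bound on the log-expectation of `f` under a bounded tilt `X`: the linear
term is the covariance of `X` with the density `f / ∫ f`, and Hoeffding's lemma bounds the rest. -/
lemma log_integral_tilt_le {S : Type*} [MeasurableSpace S] {m : Measure S} [IsProbabilityMeasure m]
    {f : S → ℝ} (hf : PosBdd f) {X : S → ℝ} (hX : Measurable X) {R : ℝ}
    (hR : ∀ᵐ x ∂m, |X x| ≤ R) :
    log (∫ x, f x ∂m.tilted X) ≤ log (∫ x, f x ∂m) + (∫ x, f x * X x ∂m) / (∫ x, f x ∂m)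
      - ∫ x, X x ∂m + R ^ 2 / 2 := by
  set G := ∫ x, f x ∂m with hG
  have hGpos : 0 < G := hf.integral_pos m
  obtain ⟨cf, hcf⟩ := hf.bdd
  have hXi : Integrable X m := Integrable.of_bound hX.aestronglyMeasurable R hR
  have hEi : Integrable (fun x => exp (X x)) m := by
    refine Integrable.of_bound (by fun_prop) (exp R) ?_
    filter_upwards [hR] with x hx
    rw [norm_of_nonneg (exp_pos _).le]
    exact exp_le_exp.2 (abs_le.1 hx).2
  have hE : 0 < ∫ x, exp (X x) ∂m := integral_exp_pos hEi
  have hexplog : (fun x => exp (log (f x))) = f := funext fun x => exp_log (hf.pos x)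
  have hfi : Integrable (fun x => exp (log (f x))) m := by rw [hexplog]; exact hf.integrable m
  have hp : IsProbabilityMeasure (m.tilted fun x => log (f x)) := isProbabilityMeasure_tilted hfi
  have hinteg : ∀ k : S → ℝ, ∫ x, k x ∂(m.tilted fun x => log (f x)) = (∫ x, f x * k x ∂m) / G := by
    intro k
    rw [integral_tilted, hexplog, ← integral_div]
    refine integral_congr_ae (.of_forall fun x => ?_)
    simp only [smul_eq_mul, exp_log (hf.pos x)]
    ring
  have h1 := hoeffding (m := m.tilted fun x => log (f x)) hX.aemeasurable
    (tilted_absolutelyContinuous _ _ hR)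
  simp only [exp_sub] at h1
  rw [integral_div, hinteg, hinteg, div_le_iff₀ (exp_pos _), ← exp_add] at h1
  have h2 : exp (∫ x, X x ∂m) ≤ ∫ x, exp (X x) ∂m := by
    have h3 : ∫ x, exp (∫ y, X y ∂m) * (1 + (X x - ∫ y, X y ∂m)) ∂m ≤ ∫ x, exp (X x) ∂m := by
      refine integral_mono ?_ hEi fun x => ?_
      · exact (((integrable_const 1).add (hXi.sub (integrable_const _))).const_mul _)
      · have : exp (X x) = exp (∫ y, X y ∂m) * exp (X x - ∫ y, X y ∂m) := by
          rw [← exp_add]; congr 1; ring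
        rw [this]
        refine mul_le_mul_of_nonneg_left ?_ (exp_pos _).le
        linarith [add_one_le_exp (X x - ∫ y, X y ∂m)]
    have h4 : ∫ x, (1 + (X x - ∫ y, X y ∂m)) ∂m = 1 := by
      rw [integral_add (g := fun x => X x - ∫ y, X y ∂m) (integrable_const 1)
        (hXi.sub (integrable_const _))]
      simp [integral_sub hXi (integrable_const _)]
    rwa [integral_const_mul, h4, mul_one] at h3
  have h4 : ∫ x, f x ∂m.tilted X = (∫ x, f x * exp (X x) ∂m) / ∫ x, exp (X x) ∂m := by
    rw [integral_tilted, ← integral_div]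
    refine integral_congr_ae (.of_forall fun x => ?_)
    simp only [smul_eq_mul]; ring
  have hN : 0 < ∫ x, f x * exp (X x) ∂m := by
    have := isProbabilityMeasure_tilted hEi
    have := hf.integral_pos (m.tilted X)
    rw [h4] at this
    exact (div_pos_iff_of_pos_right hE).1 this
  rw [h4, log_div hN.ne' hE.ne']
  have h5 : ∫ x, X x ∂m ≤ log (∫ x, exp (X x) ∂m) := (le_log_iff_exp_le hE).2 h2
  have h6 := log_le_log (div_pos hN hGpos) h1
  rw [log_exp, log_div hN.ne' hGpos.ne'] at h6
  linarith

section Gibbs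

variable {Λ : Type*} [Fintype Λ] [DecidableEq Λ] {n : ℕ}
  {μ : Measure (EuclideanSpace ℝ (Fin n))} [IsProbabilityMeasure μ]

lemma IsUniformSphere.ae_tilted (hμ : IsUniformSphere μ) (v : EuclideanSpace ℝ (Fin n)) :
    ∀ᵐ σ ∂(μ.tilted fun σ => ⟪v, σ⟫), ‖σ‖ = 1 :=
  tilted_absolutelyContinuous _ _ hμ.ae_norm

lemma IsUniformSphere.ae_fieldMeasure (hμ : IsUniformSphere μ)
    (v : Λ → EuclideanSpace ℝ (Fin n)) :
    ∀ᵐ σ ∂fieldMeasure μ v, ∀ x, ‖σ x‖ = 1 := by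
  rw [hμ.fieldMeasure_eq]
  exact tilted_absolutelyContinuous _ _ hμ.ae_pi

/-- Covariance, under a product measure with external field `v`, of the spin at `x` with `f`. -/
noncomputable def spinCov (μ : Measure (EuclideanSpace ℝ (Fin n)))
    (v : Λ → EuclideanSpace ℝ (Fin n)) (f : (Λ → EuclideanSpace ℝ (Fin n)) → ℝ) (x : Λ) :
    EuclideanSpace ℝ (Fin n) :=
  (∫ σ, f σ • σ x ∂fieldMeasure μ v)
    - (∫ σ, f σ ∂fieldMeasure μ v) • ∫ ψ, ψ ∂(μ.tilted fun σ => ⟪v x, σ⟫)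

lemma inner_spinCov (hμ : IsUniformSphere μ) (v : Λ → EuclideanSpace ℝ (Fin n))
    {f : (Λ → EuclideanSpace ℝ (Fin n)) → ℝ} (hf : PosBdd f) (x : Λ)
    (e : EuclideanSpace ℝ (Fin n)) :
    ⟪e, spinCov μ v f x⟫ = (∫ σ, f σ * ⟪e, σ x⟫ ∂fieldMeasure μ v)
      - (∫ σ, f σ ∂fieldMeasure μ v) * ∫ ψ, ⟪e, ψ⟫ ∂(μ.tilted fun σ => ⟪v x, σ⟫) := by
  have := hμ.isProb_tilted (v x)
  have := hμ.isProb_fieldMeasure v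
  obtain ⟨c, hc⟩ := hf.bdd
  have h1 : Integrable (fun σ => f σ • σ x) (fieldMeasure μ v) := by
    refine Integrable.of_bound
      (hf.1.smul (measurable_pi_apply x)).aestronglyMeasurable c ?_
    filter_upwards [hμ.ae_fieldMeasure v] with σ hσ
    rw [norm_smul, hσ, mul_one]
    exact hc σ
  have h2 : Integrable (fun ψ : EuclideanSpace ℝ (Fin n) => ψ) (μ.tilted fun σ => ⟪v x, σ⟫) := by
    refine Integrable.of_bound aestronglyMeasurable_id 1 ?_
    filter_upwards [hμ.ae_tilted (v x)] with ψ hψ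
    exact hψ.le
  rw [spinCov, inner_sub_right, inner_smul_right, ← integral_inner h1, ← integral_inner h2]
  simp only [inner_smul_right]

lemma integrable_mul_inner_spin (hμ : IsUniformSphere μ) (v : Λ → EuclideanSpace ℝ (Fin n))
    {f : (Λ → EuclideanSpace ℝ (Fin n)) → ℝ} (hf : PosBdd f) (x : Λ)
    (e : EuclideanSpace ℝ (Fin n)) :
    Integrable (fun σ => f σ * ⟪e, σ x⟫) (fieldMeasure μ v) := by
  have := hμ.isProb_fieldMeasure v
  obtain ⟨c, hc⟩ := hf.bdd
  refine Integrable.of_bound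
    (hf.1.mul (Continuous.measurable (by fun_prop))).aestronglyMeasurable (c * ‖e‖) ?_
  filter_upwards [hμ.ae_fieldMeasure v] with σ hσ
  have h1 := abs_real_inner_le_norm e (σ x)
  rw [hσ, mul_one] at h1
  rw [norm_mul]
  exact mul_le_mul (hc σ) h1 (abs_nonneg _) ((abs_nonneg _).trans (hc σ))

lemma integral_inner_spin (hμ : IsUniformSphere μ) (v : Λ → EuclideanSpace ℝ (Fin n)) (x : Λ)
    (e : EuclideanSpace ℝ (Fin n)) : ∫ σ, ⟪e, σ x⟫ ∂fieldMeasure μ v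
      = ∫ ψ, ⟪e, ψ⟫ ∂(μ.tilted fun σ => ⟪v x, σ⟫) := by
  have := fun x => hμ.isProb_tilted (v x)
  have hmp := measurePreserving_eval (fun x => μ.tilted fun σ => ⟪v x, σ⟫) x
  rw [← hmp.map_eq, integral_map hmp.measurable.aemeasurable
    (Continuous.aestronglyMeasurable (by fun_prop))]
  rfl

lemma norm_spinCov_sq_le (hμ : IsUniformSphere μ) (v : Λ → EuclideanSpace ℝ (Fin n))
    {f : (Λ → EuclideanSpace ℝ (Fin n)) → ℝ} (hf : PosBdd f) (x : Λ) :
    ‖spinCov μ v f x‖ ^ 2 ≤ 2 * (∫ σ, f σ ∂fieldMeasure μ v) *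
      ∫ σ, siteEnt (fun y => μ.tilted fun σ => ⟪v y, σ⟫) x f σ ∂fieldMeasure μ v := by
  have := fun x => hμ.isProb_tilted (v x)
  have := hμ.isProb_fieldMeasure v
  refine norm_cov_sq_le _ (fun i => hμ.ae_tilted (v i)) hf x _ fun e => ?_
  rw [inner_spinCov hμ v hf]
  simp only [mul_sub]
  change _ = ∫ σ, _ ∂fieldMeasure μ v
  rw [integral_sub (integrable_mul_inner_spin hμ v hf x e) ((hf.integrable _).mul_const _),
    integral_mul_const]

/-- Changing the field from `v` to `v + δ` changes the log-expectation of `f` to first order by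
the covariances with the spins. -/
lemma log_integral_field_le (hμ : IsUniformSphere μ) (v δ : Λ → EuclideanSpace ℝ (Fin n))
    {f : (Λ → EuclideanSpace ℝ (Fin n)) → ℝ} (hf : PosBdd f) :
    log (∫ σ, f σ ∂fieldMeasure μ (v + δ)) ≤ log (∫ σ, f σ ∂fieldMeasure μ v)
      + (∑ x, ⟪δ x, spinCov μ v f x⟫) / (∫ σ, f σ ∂fieldMeasure μ v)
      + Fintype.card Λ * (∑ x, ‖δ x‖ ^ 2) / 2 := by
  have := hμ.isProb_fieldMeasure v
  have htilt : fieldMeasure μ (v + δ) = (fieldMeasure μ v).tilted fun σ => ∑ x, ⟪δ x, σ x⟫ := by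
    rw [hμ.fieldMeasure_eq, hμ.fieldMeasure_eq, tilted_tilted]
    · congr 1
      ext σ
      simp [inner_add_left, Finset.sum_add_distrib]
    · simp only [exp_sum]
      exact Integrable.fintype_prod (f := fun x σ => exp ⟪v x, σ⟫)
        fun x => hμ.integrable_exp (v x)
  have hG := hf.integral_pos (fieldMeasure μ v)
  have h1 := log_integral_tilt_le (m := fieldMeasure μ v) hf (X := fun σ => ∑ x, ⟪δ x, σ x⟫)
    (Continuous.measurable (by fun_prop)) (R := ∑ x, ‖δ x‖) (by
      filter_upwards [hμ.ae_fieldMeasure v] with σ hσ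
      refine (Finset.abs_sum_le_sum_abs _ _).trans (Finset.sum_le_sum fun x _ => ?_)
      have := abs_real_inner_le_norm (δ x) (σ x)
      rwa [hσ, mul_one] at this)
  rw [← htilt] at h1
  have hone : PosBdd fun _ : Λ → EuclideanSpace ℝ (Fin n) => (1 : ℝ) :=
    ⟨measurable_const, 1, 1, one_pos, fun _ => ⟨le_rfl, le_rfl⟩⟩
  have h2 : ∫ σ, f σ * ∑ x, ⟪δ x, σ x⟫ ∂fieldMeasure μ v
      = ∑ x, ∫ σ, f σ * ⟪δ x, σ x⟫ ∂fieldMeasure μ v := by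
    simp only [Finset.mul_sum]
    exact integral_finsetSum _ fun x _ => integrable_mul_inner_spin hμ v hf x (δ x)
  have h3 : ∫ σ, ∑ x, ⟪δ x, σ x⟫ ∂fieldMeasure μ v
      = ∑ x, ∫ ψ, ⟪δ x, ψ⟫ ∂(μ.tilted fun σ => ⟪v x, σ⟫) := by
    rw [integral_finsetSum _ fun x _ => by
      simpa using integrable_mul_inner_spin hμ v hone x (δ x)]
    simp only [integral_inner_spin hμ]
  have h4 := sq_sum_le_card_mul_sum_sq (s := Finset.univ) (f := fun x => ‖δ x‖)
  rw [Finset.card_univ] at h4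
  rw [h2, h3] at h1
  have h5 : (∑ x, ⟪δ x, spinCov μ v f x⟫) / (∫ σ, f σ ∂fieldMeasure μ v)
      = (∑ x, ∫ σ, f σ * ⟪δ x, σ x⟫ ∂fieldMeasure μ v) / (∫ σ, f σ ∂fieldMeasure μ v)
        - ∑ x, ∫ ψ, ⟪δ x, ψ⟫ ∂(μ.tilted fun σ => ⟪v x, σ⟫) := by
    simp only [inner_spinCov hμ v hf, Finset.sum_sub_distrib, ← Finset.mul_sum]
    field_simp
  rw [h5]
  linarith

/-- If the conditional entropies of `f` at each site are controlled, uniformly in the external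
field, by the averages of `Γ`, then so is the entropy of `f` under the Gibbs measure. -/
theorem ent_gibbs_le (hμ : IsUniformSphere μ) (hn : 1 ≤ n) {M Q : Matrix Λ Λ ℝ} {r : ℝ}
    (hr : 0 < r) (hrn : r < n) (hM : M.PosSemidef) (hQ : Qᵀ * Q = r • 1 - M)
    {f : (Λ → EuclideanSpace ℝ (Fin n)) → ℝ} (hf : PosBdd f)
    {Γ : Λ → (Λ → EuclideanSpace ℝ (Fin n)) → ℝ} (hΓm : ∀ x, Measurable (Γ x)) {B : ℝ}
    (hΓ : ∀ x σ, |Γ x σ| ≤ B)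
    (hsite : ∀ (v : Λ → EuclideanSpace ℝ (Fin n)) (x : Λ),
      ∫ σ, siteEnt (fun y => μ.tilted fun σ => ⟪v y, σ⟫) x f σ ∂fieldMeasure μ v
        ≤ ∫ σ, Γ x σ ∂fieldMeasure μ v) :
    ent ((Measure.pi fun _ : Λ => μ).tilted
        fun σ => -(1 / 2) * ∑ x, ∑ y, M x y * ⟪σ x, σ y⟫) f
      ≤ (1 + n * r / (n - r)) * ∑ x, ∫ σ, Γ x σ ∂((Measure.pi fun _ : Λ => μ).tilted
        fun σ => -(1 / 2) * ∑ x, ∑ y, M x y * ⟪σ x, σ y⟫) := by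
  set m := renMeasure μ Q (renNorm μ M r) with hm
  have hprob : IsProbabilityMeasure m := isProb_renMeasure hμ hM hQ
  have hpf := hμ.isProb_fieldMeasure (Λ := Λ)
  have hpt := hμ.isProb_tilted
  have hn' : (0 : ℝ) < n := by exact_mod_cast hn
  set G : (Λ → EuclideanSpace ℝ (Fin n)) → ℝ :=
    fun η => ∫ σ, f σ ∂fieldMeasure μ (siteMul Qᵀ η) with hG
  set A : (Λ → EuclideanSpace ℝ (Fin n)) → ℝ :=
    fun η => ∑ x, ∫ σ, Γ x σ ∂fieldMeasure μ (siteMul Qᵀ η) with hA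
  have hGm : Measurable G := hμ.measurable_integral_fieldMeasure Q hf.1
  have hGx : ∀ x, Measurable fun η => ∫ σ, Γ x σ ∂fieldMeasure μ (siteMul Qᵀ η) :=
    fun x => hμ.measurable_integral_fieldMeasure Q (hΓm x)
  have hAm : Measurable A := Finset.measurable_sum _ fun x _ => hGx x
  have hGPB : PosBdd G := by
    obtain ⟨_, a, b, ha, h⟩ := id hf
    exact ⟨hGm, a, b, ha, fun η => PosBdd.integral_mem hf.1 ha h _⟩
  have hΓb : ∀ x η, |∫ σ, Γ x σ ∂fieldMeasure μ (siteMul Qᵀ η)| ≤ B := by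
    intro x η
    have h1 := norm_integral_le_of_norm_le_const (μ := fieldMeasure μ (siteMul Qᵀ η))
      (f := Γ x) (.of_forall (hΓ x))
    simpa using h1
  have hAb : ∀ η, |A η| ≤ Fintype.card Λ * B := by
    intro η
    refine (Finset.abs_sum_le_sum_abs _ _).trans ?_
    refine (Finset.sum_le_sum fun x _ => hΓb x η).trans ?_
    simp
  have hAi : Integrable A m := integrable_of_measurable_bdd hAm _ hAb
  -- the entropy inequality for the renormalised measure, at `g = log G`
  have hexpg : ∀ η, exp (log (G η)) = G η := fun η => exp_log (hGPB.pos η)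
  obtain ⟨cg, hcg⟩ := hGPB.log_bdd
  have hl : 0 < 1 - r / n := by
    rw [sub_pos, div_lt_one hn']; exact hrn
  have hren : (∫ η, G η * log (G η) ∂m) - (∫ η, G η ∂m) * log (∫ η, G η ∂m)
      ≤ 1 / (2 * (1 - r / n)) * ∫ η, 2 * r * A η ∂m := by
    obtain ⟨_, a, b, ha, hab⟩ := id hGPB
    have key := entropy_exp_le_of_strongly_convex (H := renPot μ Q (renNorm μ M r))
      (hμ.continuous_renPot _ _).measurable (m := m) rfl hprob hl
      (fun t s ht hs hts x y => renPot_convex hμ hn hr hM hQ _ ht hs hts x y)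
      (g := fun η => log (G η)) (W := fun η => 2 * r * A η / G η) hGm.log
      ((hAm.const_mul _).div hGm) hcg (C := 2 * r * (Fintype.card Λ * B) / a)
      (fun η => by
        refine (le_abs_self _).trans ?_
        rw [abs_div, abs_mul, abs_of_pos (hGPB.pos η), abs_of_pos (show 0 < 2 * r by positivity)]
        have h1 := hAb η
        have h2 := (abs_nonneg _).trans h1
        have h3 := (hab η).1
        gcongr)
      (D := fun η => siteMul Q fun x => (G η)⁻¹ • spinCov μ (siteMul Qᵀ η) f x)
      (fun η => by
        refine (sum_norm_siteMul_sq_le hM hQ _).trans ?_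
        have h1 : ∀ x, ‖(G η)⁻¹ • spinCov μ (siteMul Qᵀ η) f x‖ ^ 2
            ≤ 2 / G η * ∫ σ, Γ x σ ∂fieldMeasure μ (siteMul Qᵀ η) := by
          intro x
          have hp := hGPB.pos η
          have h2 := norm_spinCov_sq_le hμ (siteMul Qᵀ η) hf x
          have h3 := hsite (siteMul Qᵀ η) x
          rw [norm_smul, mul_pow, norm_of_nonneg (inv_pos.2 hp).le]
          calc (G η)⁻¹ ^ 2 * ‖spinCov μ (siteMul Qᵀ η) f x‖ ^ 2
              ≤ (G η)⁻¹ ^ 2 * (2 * G η * ∫ σ, Γ x σ ∂fieldMeasure μ (siteMul Qᵀ η)) := by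
                refine mul_le_mul_of_nonneg_left (h2.trans ?_) (by positivity)
                exact mul_le_mul_of_nonneg_left h3 (by positivity)
            _ = _ := by field_simp
        calc r * ∑ x, ‖(G η)⁻¹ • spinCov μ (siteMul Qᵀ η) f x‖ ^ 2
            ≤ r * ∑ x, 2 / G η * ∫ σ, Γ x σ ∂fieldMeasure μ (siteMul Qᵀ η) :=
              mul_le_mul_of_nonneg_left (Finset.sum_le_sum fun x _ => h1 x) hr.le
          _ = _ := by rw [← Finset.mul_sum]; simp only [hA]; ring)
      (K := Fintype.card Λ * r)
      (fun z η => by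
        have h1 := log_integral_field_le hμ (siteMul Qᵀ z) (siteMul Qᵀ (η - z)) hf
        have h2 : siteMul Qᵀ z + siteMul Qᵀ (η - z) = siteMul Qᵀ η := by
          funext y
          rw [Pi.add_apply, siteMul_sub]; abel
        rw [h2] at h1
        have h3 := sum_norm_siteMul_transpose_sq_le hr hM hQ (η - z)
        have h4 : ∑ i, ⟪siteMul Q (fun x => (G z)⁻¹ • spinCov μ (siteMul Qᵀ z) f x) i, η i - z i⟫
            = (∑ x, ⟪siteMul Qᵀ (η - z) x, spinCov μ (siteMul Qᵀ z) f x⟫) / G z := by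
          have h5 := sum_inner_siteMul_transpose Q (η - z)
            (fun x => (G z)⁻¹ • spinCov μ (siteMul Qᵀ z) f x)
          simp only [inner_smul_right, ← Finset.mul_sum] at h5
          rw [div_eq_inv_mul, h5]
          exact Finset.sum_congr rfl fun i _ => real_inner_comm _ _
        rw [h4]
        refine h1.trans ?_
        have h6 : Fintype.card Λ * (∑ x, ‖siteMul Qᵀ (η - z) x‖ ^ 2) / 2
            ≤ Fintype.card Λ * r / 2 * ∑ i, ‖η i - z i‖ ^ 2 := by
          have := mul_le_mul_of_nonneg_left h3 (Nat.cast_nonneg (α := ℝ) (Fintype.card Λ))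
          simp only [Pi.sub_apply] at this
          linarith
        linarith)
    simp only [hexpg] at key
    refine key.trans (le_of_eq ?_)
    congr 1
    refine integral_congr_ae (.of_forall fun η => ?_)
    have := hGPB.pos η
    field_simp
  obtain ⟨c1, hc1⟩ := hf.bdd
  obtain ⟨c2, hc2⟩ := hf.mul_log_bdd
  have e1 := integral_gibbs_eq hμ hM hQ hf.1 hc1
  have e2 := integral_gibbs_eq hμ hM hQ (f := fun σ => f σ * log (f σ)) (hf.1.mul hf.1.log) hc2
  have e3 : ∑ x, ∫ σ, Γ x σ ∂((Measure.pi fun _ : Λ => μ).tilted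
        fun σ => -(1 / 2) * ∑ x, ∑ y, M x y * ⟪σ x, σ y⟫) = ∫ η, A η ∂m := by
    rw [integral_finsetSum _ fun x _ => integrable_of_measurable_bdd (hGx x) B (hΓb x)]
    exact Finset.sum_congr rfl fun x _ => integral_gibbs_eq hμ hM hQ (hΓm x) (hΓ x)
  have h7 : ∫ η, ∫ σ, f σ * log (f σ) ∂fieldMeasure μ (siteMul Qᵀ η) ∂m
      ≤ ∫ η, (A η + G η * log (G η)) ∂m := by
    refine integral_mono ?_ (hAi.add (hGPB.integrable_mul_log m)) fun η => ?_
    · refine integrable_of_measurable_bdd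
        (hμ.measurable_integral_fieldMeasure Q (hf.1.mul hf.1.log)) c2 fun η => ?_
      have h1 := norm_integral_le_of_norm_le_const (μ := fieldMeasure μ (siteMul Qᵀ η))
        (f := fun σ => f σ * log (f σ)) (.of_forall hc2)
      simpa using h1
    · have h8 := ent_pi_le (fun y => μ.tilted fun σ => ⟪siteMul Qᵀ η y, σ⟫) hf
      have h9 := Finset.sum_le_sum fun x (_ : x ∈ Finset.univ) => hsite (siteMul Qᵀ η) x
      have h10 := h8.trans h9
      change ent (fieldMeasure μ (siteMul Qᵀ η)) f ≤ A η at h10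
      rw [ent] at h10
      simp only [hG] at h10 ⊢
      linarith
  rw [integral_add hAi (hGPB.integrable_mul_log m)] at h7
  rw [ent, e3, e1, e2]
  rw [integral_const_mul] at hren
  have h11 : 1 / (2 * (1 - r / n)) * (2 * r * ∫ η, A η ∂m) = n * r / (n - r) * ∫ η, A η ∂m := by
    have : (n : ℝ) - r ≠ 0 := by linarith
    field_simp
  rw [h11] at hren
  simp only [hG] at hren h7 ⊢
  linarith

end Gibbs

/-! ### Smooth functions on products of spheres -/

section Smooth

variable {Λ : Type*} [Fintype Λ] [DecidableEq Λ] {n : ℕ}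

/-- The tangential gradient on the sphere of a function on the ambient Euclidean space. -/
noncomputable def tanGrad (g : EuclideanSpace ℝ (Fin n) → ℝ) (ψ : EuclideanSpace ℝ (Fin n)) :
    EuclideanSpace ℝ (Fin n) := gradient g ψ - ⟪ψ, gradient g ψ⟫ • ψ

lemma continuous_tanGrad_site {F : (Λ → EuclideanSpace ℝ (Fin n)) → ℝ}
    (hF : ContDiff ℝ (⊤ : ℕ∞) F) (x : Λ) :
    Continuous fun σ => tanGrad (fun ψ => F (Function.update σ x ψ)) (σ x) := by
  have h1 : ∀ σ : Λ → EuclideanSpace ℝ (Fin n),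
      fderiv ℝ (fun ψ => F (Function.update σ x ψ)) (σ x)
        = (fderiv ℝ F σ).comp (ContinuousLinearMap.pi
          (Pi.single x (ContinuousLinearMap.id ℝ (EuclideanSpace ℝ (Fin n))))) := by
    intro σ
    have h2 : HasFDerivAt F (fderiv ℝ F (Function.update σ x (σ x)))
        (Function.update σ x (σ x)) :=
      ((hF.differentiable (by simp)) _).hasFDerivAt
    have h3 := h2.comp (σ x) (hasFDerivAt_update σ (σ x))
    rw [Function.update_eq_self] at h3
    exact h3.fderiv
  have hc : Continuous fun σ => fderiv ℝ F σ := hF.continuous_fderiv (by simp)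
  have h4 : Continuous fun σ : Λ → EuclideanSpace ℝ (Fin n) =>
      gradient (fun ψ => F (Function.update σ x ψ)) (σ x) := by
    simp only [gradient, h1]
    exact (LinearIsometryEquiv.continuous _).comp (hc.clm_comp continuous_const)
  unfold tanGrad
  fun_prop

lemma tanGrad_update (F : (Λ → EuclideanSpace ℝ (Fin n)) → ℝ) (x : Λ)
    (σ : Λ → EuclideanSpace ℝ (Fin n)) (ψ : EuclideanSpace ℝ (Fin n)) :
    tanGrad (fun ψ' => F (Function.update (Function.update σ x ψ) x ψ'))
      (Function.update σ x ψ x) = tanGrad (fun ψ' => F (Function.update σ x ψ')) ψ := by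
  simp

/-- Replacing `g` by `√(g² + ε)` does not increase the tangential gradient. -/
lemma norm_tanGrad_sqrt_le {g : EuclideanSpace ℝ (Fin n) → ℝ} (hg : Differentiable ℝ g) {ε : ℝ}
    (hε : 0 < ε) (ψ : EuclideanSpace ℝ (Fin n)) :
    ‖tanGrad (fun ψ => √(g ψ ^ 2 + ε)) ψ‖ ≤ ‖tanGrad g ψ‖ := by
  have hpos : 0 < g ψ ^ 2 + ε := by positivity
  have h1 : HasFDerivAt (fun ψ => √(g ψ ^ 2 + ε))
      ((g ψ / √(g ψ ^ 2 + ε)) • fderiv ℝ g ψ) ψ := by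
    have h2 := (((hg ψ).hasFDerivAt.pow 2).add_const ε).sqrt hpos.ne'
    refine h2.congr_fderiv ?_
    rw [smul_smul]
    congr 1
    have := (sqrt_pos.2 hpos).ne'
    simp
    field_simp
  have h3 : gradient (fun ψ => √(g ψ ^ 2 + ε)) ψ = (g ψ / √(g ψ ^ 2 + ε)) • gradient g ψ := by
    simp only [gradient, h1.fderiv, map_smulₛₗ]
    simp
  have h4 : tanGrad (fun ψ => √(g ψ ^ 2 + ε)) ψ = (g ψ / √(g ψ ^ 2 + ε)) • tanGrad g ψ := by
    simp only [tanGrad, h3, inner_smul_right, smul_sub, smul_smul]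
  rw [h4, norm_smul]
  refine mul_le_of_le_one_left (norm_nonneg _) ?_
  rw [norm_div, norm_of_nonneg (sqrt_nonneg _), div_le_one (sqrt_pos.2 hpos), norm_eq_abs]
  exact abs_le_sqrt (by linarith)

/-- The configurations all of whose spins are unit vectors. -/
def unitConfigs (Λ : Type*) (n : ℕ) : Set (Λ → EuclideanSpace ℝ (Fin n)) := {σ | ∀ x, ‖σ x‖ = 1}

lemma isCompact_unitConfigs : IsCompact (unitConfigs Λ n) := by
  have h := isCompact_univ_pi fun _ : Λ =>
    isCompact_sphere (0 : EuclideanSpace ℝ (Fin n)) 1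
  convert h using 1
  ext σ
  simp [unitConfigs]

lemma tendsto_ent_add {S : Type*} [MeasurableSpace S] {m : Measure S} [IsProbabilityMeasure m]
    {g : S → ℝ} (hg : Measurable g) {b : ℝ} (h0 : ∀ x, 0 ≤ g x) (hb : ∀ᵐ x ∂m, g x ≤ b) :
    Filter.Tendsto (fun ε : ℝ => ent m fun x => g x + ε) (nhdsWithin 0 (Set.Ioi 0))
      (nhds (ent m g)) := by
  have hgi : Integrable g m := by
    refine Integrable.of_bound hg.aestronglyMeasurable b ?_
    filter_upwards [hb] with x hx
    rwa [norm_of_nonneg (h0 x)]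
  obtain ⟨C, hC⟩ := (isCompact_Icc (a := (0 : ℝ)) (b := b + 1)).exists_bound_of_continuousOn
    continuous_mul_log.continuousOn
  have hlt : ∀ᶠ ε in nhdsWithin (0 : ℝ) (Set.Ioi 0), 0 < ε ∧ ε < 1 := by
    filter_upwards [self_mem_nhdsWithin, nhdsWithin_le_nhds (Iio_mem_nhds one_pos)] with ε h1 h2
      using ⟨h1, h2⟩
  have hid : Filter.Tendsto (fun ε : ℝ => ε) (nhdsWithin 0 (Set.Ioi 0)) (nhds 0) :=
    nhdsWithin_le_nhds
  have h1 : Filter.Tendsto (fun ε : ℝ => ∫ x, (g x + ε) * log (g x + ε) ∂m)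
      (nhdsWithin 0 (Set.Ioi 0)) (nhds (∫ x, g x * log (g x) ∂m)) := by
    refine tendsto_integral_filter_of_dominated_convergence (fun _ => C) ?_ ?_
      (integrable_const _) ?_
    · exact .of_forall fun ε => (by fun_prop : Measurable fun x =>
        (g x + ε) * log (g x + ε)).aestronglyMeasurable
    · filter_upwards [hlt] with ε hε
      filter_upwards [hb] with x hx
      exact hC _ ⟨by linarith [h0 x], by linarith⟩
    · refine .of_forall fun x => ?_
      have h2 := (continuous_mul_log.tendsto (g x + 0)).comp (hid.const_add (g x))
      rw [add_zero] at h2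
      exact h2
  have h3 : ∀ ε : ℝ, ∫ x, (g x + ε) ∂m = (∫ x, g x ∂m) + ε := fun ε => by
    rw [integral_add hgi (integrable_const _)]; simp
  have h4 := (continuous_mul_log.tendsto ((∫ x, g x ∂m) + 0)).comp
    (hid.const_add (∫ x, g x ∂m))
  rw [add_zero] at h4
  have h5 := h1.sub h4
  refine h5.congr fun ε => ?_
  simp only [ent, h3, Function.comp]

lemma ent_congr_ae {S : Type*} [MeasurableSpace S] {m : Measure S} {f g : S → ℝ}
    (h : f =ᵐ[m] g) : ent m f = ent m g := by
  unfold ent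
  rw [integral_congr_ae h, integral_congr_ae (h.mono fun x hx => by
    simp only [hx] : (fun x => f x * log (f x)) =ᵐ[m] fun x => g x * log (g x))]

variable {μ : Measure (EuclideanSpace ℝ (Fin n))} [IsProbabilityMeasure μ]

open Classical in
/-- The entropy bound for `F² + ε`. The function and the squared gradients are modified off the
support of the measures so as to become bounded. -/
theorem ent_gibbs_sq_add_le (hμ : IsUniformSphere μ) (hn : 1 ≤ n) {M Q : Matrix Λ Λ ℝ} {r : ℝ}
    (hr : 0 < r) (hrn : r < n) (hM : M.PosSemidef) (hQ : Qᵀ * Q = r • 1 - M) {γ : ℝ} (hγ : 0 < γ)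
    (hLSI : ∀ (h : EuclideanSpace ℝ (Fin n)) (f : EuclideanSpace ℝ (Fin n) → ℝ),
      ContDiff ℝ (⊤ : ℕ∞) f → ent (μ.tilted fun σ => ⟪h, σ⟫) (fun σ => (f σ) ^ 2)
        ≤ (2 / γ) * ∫ σ, ‖tanGrad f σ‖ ^ 2 ∂(μ.tilted fun σ => ⟪h, σ⟫))
    {F : (Λ → EuclideanSpace ℝ (Fin n)) → ℝ} (hF : ContDiff ℝ (⊤ : ℕ∞) F) {ε : ℝ} (hε : 0 < ε) :
    ent ((Measure.pi fun _ : Λ => μ).tilted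
        fun σ => -(1 / 2) * ∑ x, ∑ y, M x y * ⟪σ x, σ y⟫) (fun σ => F σ ^ 2 + ε)
      ≤ (1 + n * r / (n - r)) * ∑ x, ∫ σ,
        2 / γ * ‖tanGrad (fun ψ => F (Function.update σ x ψ)) (σ x)‖ ^ 2
        ∂((Measure.pi fun _ : Λ => μ).tilted
          fun σ => -(1 / 2) * ∑ x, ∑ y, M x y * ⟪σ x, σ y⟫) := by
  set K := unitConfigs Λ n with hK
  have hKc : IsCompact K := isCompact_unitConfigs
  have hKm : MeasurableSet K := hKc.isClosed.measurableSet
  have hFc := hF.continuous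
  set f : (Λ → EuclideanSpace ℝ (Fin n)) → ℝ := K.piecewise (fun σ => F σ ^ 2 + ε) 1 with hf
  have hfK : ∀ σ ∈ K, f σ = F σ ^ 2 + ε := fun σ hσ => Set.piecewise_eq_of_mem _ _ _ hσ
  have hfN : ∀ σ ∉ K, f σ = 1 := fun σ hσ => Set.piecewise_eq_of_notMem _ _ _ hσ
  set T : Λ → (Λ → EuclideanSpace ℝ (Fin n)) → ℝ := fun x σ =>
    2 / γ * ‖tanGrad (fun ψ => F (Function.update σ x ψ)) (σ x)‖ ^ 2 with hT
  have hTc : ∀ x, Continuous (T x) := fun x => by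
    have := continuous_tanGrad_site hF x
    fun_prop
  have hT0 : ∀ x σ, 0 ≤ T x σ := fun x σ => by simp only [hT]; positivity
  have hfPB : PosBdd f := by
    obtain ⟨b, hb⟩ := hKc.exists_bound_of_continuousOn (f := fun σ => F σ ^ 2 + ε)
      (by fun_prop)
    refine ⟨Measurable.piecewise hKm (Continuous.measurable (by fun_prop)) measurable_const,
      min ε 1, max b 1, by positivity, fun σ => ?_⟩
    by_cases hσ : σ ∈ K
    · rw [hfK σ hσ]
      have h1 := hb σ hσ
      exact ⟨(min_le_left _ _).trans (by nlinarith [sq_nonneg (F σ)]),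
        ((le_abs_self _).trans h1).trans (le_max_left _ _)⟩
    · rw [hfN σ hσ]
      exact ⟨min_le_right _ _, le_max_right _ _⟩
  have hB : ∃ B, ∀ x, ∀ σ ∈ K, T x σ ≤ B := by
    choose B hB using fun x => hKc.exists_bound_of_continuousOn (hTc x).continuousOn
    refine ⟨∑ x, |B x|, fun x σ hσ => ?_⟩
    exact ((le_abs_self _).trans (hB x σ hσ)).trans ((le_abs_self _).trans
      (Finset.single_le_sum (f := fun x => |B x|) (fun i _ => abs_nonneg _) (Finset.mem_univ x)))
  obtain ⟨B, hB⟩ := hB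
  have key := ent_gibbs_le hμ hn hr hrn hM hQ hfPB (Γ := fun x => K.indicator (T x))
    (fun x => (hTc x).measurable.indicator hKm) (B := |B|) (fun x σ => by
      by_cases hσ : σ ∈ K
      · simp only [Set.indicator_of_mem hσ, abs_of_nonneg (hT0 x σ)]
        exact (hB x σ hσ).trans (le_abs_self _)
      · simp [hσ]) ?_
  · have hνK : ∀ᵐ σ ∂((Measure.pi fun _ : Λ => μ).tilted
        fun σ => -(1 / 2) * ∑ x, ∑ y, M x y * ⟪σ x, σ y⟫), σ ∈ K :=
      tilted_absolutelyContinuous _ _ hμ.ae_pi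
    rw [ent_congr_ae (g := fun σ => F σ ^ 2 + ε)
      (hνK.mono fun σ hσ => hfK σ hσ)] at key
    refine key.trans (le_of_eq ?_)
    congr 1
    refine Finset.sum_congr rfl fun x _ => integral_congr_ae ?_
    filter_upwards [hνK] with σ hσ
    simp [hσ, hT]
  · intro v x
    have hp := hμ.isProb_tilted
    have hpf := hμ.isProb_fieldMeasure v
    have hΓi : Integrable (K.indicator (T x)) (fieldMeasure μ v) := by
      refine integrable_of_measurable_bdd ((hTc x).measurable.indicator hKm) |B| fun σ => ?_
      by_cases hσ : σ ∈ K
      · simp only [Set.indicator_of_mem hσ, abs_of_nonneg (hT0 x σ)]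
        exact (hB x σ hσ).trans (le_abs_self _)
      · simp [hσ]
    obtain ⟨hi, he⟩ := integral_update_prod (fun y => μ.tilted fun σ => ⟪v y, σ⟫) x hΓi
      ((hTc x).measurable.indicator hKm)
    change _ = ∫ σ, _ ∂fieldMeasure μ v at he
    rw [← he]
    refine integral_mono_ae (integrable_siteEnt _ hfPB x) hi ?_
    filter_upwards [hμ.ae_fieldMeasure v] with σ hσ
    have hupd : ∀ᵐ ψ ∂(μ.tilted fun σ => ⟪v x, σ⟫), Function.update σ x ψ ∈ K := by
      filter_upwards [hμ.ae_tilted (v x)] with ψ hψ y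
      by_cases hy : y = x
      · subst hy; simpa using hψ
      · simpa [hy] using hσ y
    have hg : ContDiff ℝ (⊤ : ℕ∞) fun ψ => F (Function.update σ x ψ) :=
      hF.comp (contDiff_update _ σ x)
    have hpos : ∀ ψ, 0 < F (Function.update σ x ψ) ^ 2 + ε := fun ψ => by positivity
    have h1 := hLSI (v x) (fun ψ => √(F (Function.update σ x ψ) ^ 2 + ε))
      (((hg.pow 2).add contDiff_const).sqrt fun ψ => (hpos ψ).ne')
    simp only [sq_sqrt (hpos _).le] at h1
    have h2 : siteEnt (fun y => μ.tilted fun σ => ⟪v y, σ⟫) x f σ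
        = ent (μ.tilted fun σ => ⟪v x, σ⟫) fun ψ => F (Function.update σ x ψ) ^ 2 + ε :=
      ent_congr_ae (hupd.mono fun ψ hψ => hfK _ hψ)
    rw [h2]
    refine h1.trans ?_
    rw [← integral_const_mul]
    have h3 : Integrable (fun ψ => K.indicator (T x) (Function.update σ x ψ))
        (μ.tilted fun σ => ⟪v x, σ⟫) := by
      refine integrable_of_measurable_bdd
        (((hTc x).measurable.indicator hKm).comp (measurable_update σ)) |B| fun ψ => ?_
      by_cases hσ : Function.update σ x ψ ∈ K
      · simp only [Set.indicator_of_mem hσ, abs_of_nonneg (hT0 x _)]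
        exact (hB x _ hσ).trans (le_abs_self _)
      · simp [hσ]
    refine integral_mono_of_nonneg (.of_forall fun ψ => ?_) h3 ?_
    · simp only [Pi.zero_apply]; positivity
    · filter_upwards [hupd] with ψ hψ
      simp only [Set.indicator_of_mem hψ, hT, tanGrad_update]
      have := norm_tanGrad_sqrt_le (hg.differentiable (by simp)) hε ψ
      gcongr

end Smooth

/-- Main theorem (Theorem 1): the `O(n)` model with symmetric positive definite coupling
matrix `M` whose largest eigenvalue `r = ‖M‖` satisfies `r < n` obeys the uniform
logarithmic Sobolev inequality
`Ent_ν(F²) ≤ (2/γ)(1 + 2 n ‖M‖/(n - ‖M‖)) Σ_x ∫ ‖∇ᵀ_{σ_x} F‖² dν`,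
where `γ` is a uniform LSI constant for the tilted single-spin measures
`μ^h ∝ e^{h·σ} μ` on the sphere, with the tangential gradient
`∇ᵀf(σ) = ∇f(σ) - ⟪σ, ∇f(σ)⟫ σ`.  The uniform measure `μ` on the unit sphere
`S^{n-1} ⊂ ℝⁿ` is encoded as a probability measure carried by the sphere and invariant
under every linear isometry of `ℝⁿ`; the largest eigenvalue is encoded by the Rayleigh
quotient bound `(v, Mv) ≤ r (v, v)`. -/
theorem On_model_LSI
    (Λ : Type*) [Fintype Λ] [DecidableEq Λ] [Nonempty Λ]
    (n : ℕ) (hn : 1 ≤ n)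
    (M : Matrix Λ Λ ℝ) (hMsymm : M.IsSymm) (hMpos : M.PosDef)
    (r : ℝ) (hMr : ∀ v : Λ → ℝ, v ⬝ᵥ M.mulVec v ≤ r * (v ⬝ᵥ v)) (hr : r < n)
    (μ : MeasureTheory.Measure (EuclideanSpace ℝ (Fin n))) [IsProbabilityMeasure μ]
    (hμsphere : μ (Metric.sphere (0 : EuclideanSpace ℝ (Fin n)) 1)ᶜ = 0)
    (hμunif : ∀ L : EuclideanSpace ℝ (Fin n) ≃ₗᵢ[ℝ] EuclideanSpace ℝ (Fin n),
      μ.map L = μ)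
    (μh : EuclideanSpace ℝ (Fin n) → MeasureTheory.Measure (EuclideanSpace ℝ (Fin n)))
    (hμh : ∀ h, μh h = μ.withDensity (fun σ =>
      ENNReal.ofReal (Real.exp ⟪h, σ⟫ / ∫ σ', Real.exp ⟪h, σ'⟫ ∂μ)))
    (γ : ℝ) (hγ : 0 < γ)
    (hLSI : ∀ (h : EuclideanSpace ℝ (Fin n)) (f : EuclideanSpace ℝ (Fin n) → ℝ),
      ContDiff ℝ (⊤ : ℕ∞) f →
      ent (μh h) (fun σ => (f σ) ^ 2)
        ≤ (2 / γ) * ∫ σ, ‖gradient f σ - ⟪σ, gradient f σ⟫ • σ‖ ^ 2 ∂(μh h))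
    (ν : MeasureTheory.Measure (Λ → EuclideanSpace ℝ (Fin n)))
    (hν : ν = (Measure.pi (fun _ : Λ => μ)).withDensity (fun σ => ENNReal.ofReal
      (Real.exp (-(1 / 2) * ∑ x, ∑ y, M x y * ⟪σ x, σ y⟫) /
        ∫ σ', Real.exp (-(1 / 2) * ∑ x, ∑ y, M x y * ⟪σ' x, σ' y⟫)
          ∂(Measure.pi (fun _ : Λ => μ)))))
    (F : (Λ → EuclideanSpace ℝ (Fin n)) → ℝ) (hF : ContDiff ℝ (⊤ : ℕ∞) F) :
    ent ν (fun σ => (F σ) ^ 2)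
      ≤ (2 / γ) * (1 + 2 * n * r / (n - r)) *
          ∑ x : Λ, ∫ σ,
            ‖gradient (fun ψ => F (Function.update σ x ψ)) (σ x)
              - ⟪σ x, gradient (fun ψ => F (Function.update σ x ψ)) (σ x)⟫ • σ x‖ ^ 2
            ∂ν := by
  have hμ : IsUniformSphere μ := ⟨hμsphere, hμunif⟩
  have hr0 : 0 < r := pos_of_posDef hMpos hMr
  obtain ⟨Q, hQ⟩ := exists_factor hMsymm hMr
  have hν' : ν = (Measure.pi fun _ : Λ => μ).tilted
      fun σ => -(1 / 2) * ∑ x, ∑ y, M x y * ⟪σ x, σ y⟫ := hν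
  have hLSI' : ∀ (h : EuclideanSpace ℝ (Fin n)) (f : EuclideanSpace ℝ (Fin n) → ℝ),
      ContDiff ℝ (⊤ : ℕ∞) f → ent (μ.tilted fun σ => ⟪h, σ⟫) (fun σ => (f σ) ^ 2)
        ≤ (2 / γ) * ∫ σ, ‖tanGrad f σ‖ ^ 2 ∂(μ.tilted fun σ => ⟪h, σ⟫) := by
    intro h f hf
    have h1 := hLSI h f hf
    rw [hμh] at h1
    exact h1
  have key := fun (ε : ℝ) (hε : 0 < ε) =>
    ent_gibbs_sq_add_le hμ hn hr0 hr hMpos.posSemidef hQ hγ hLSI' hF hε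
  rw [← hν'] at key
  have hprob : IsProbabilityMeasure ν := by
    rw [hν']
    exact isProbabilityMeasure_tilted (integrable_gibbs hMpos.posSemidef)
  have hνK : ∀ᵐ σ ∂ν, σ ∈ unitConfigs Λ n := by
    rw [hν']
    exact tilted_absolutelyContinuous _ _ hμ.ae_pi
  obtain ⟨b, hb⟩ := (isCompact_unitConfigs (Λ := Λ) (n := n)).exists_bound_of_continuousOn
    (f := fun σ => F σ ^ 2) (hF.continuous.pow 2).continuousOn
  have hlim := tendsto_ent_add (m := ν) (g := fun σ => F σ ^ 2)
    (hF.continuous.pow 2).measurable (fun σ => sq_nonneg _)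
    (hνK.mono fun σ hσ => (le_abs_self _).trans (hb σ hσ))
  refine (le_of_tendsto hlim (Filter.mem_of_superset self_mem_nhdsWithin key)).trans ?_
  simp only [integral_const_mul, ← Finset.mul_sum]
  set S := ∑ x : Λ, ∫ σ, ‖tanGrad (fun ψ => F (Function.update σ x ψ)) (σ x)‖ ^ 2 ∂ν with hS
  have hS0 : 0 ≤ S := Finset.sum_nonneg fun x _ => integral_nonneg fun σ => by positivity
  change _ ≤ 2 / γ * (1 + 2 * n * r / (n - r)) * S
  have hnr : 0 < (n : ℝ) - r := by linarith
  have h1 : (n : ℝ) * r / (n - r) ≤ 2 * n * r / (n - r) := by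
    have : 0 ≤ (n : ℝ) * r := by positivity
    gcongr
    linarith
  calc (1 + n * r / (n - r)) * (2 / γ * S) ≤ (1 + 2 * n * r / (n - r)) * (2 / γ * S) := by
        gcongr
    _ = _ := by ring
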